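/- arXiv:2510.15807 — 2 statements merged into one kernel-verified Lean document; each statement's English description precedes it below -/
import Mathlib

section
/- For every integer k ≥ 0 one has E[V_2^k] = 4(k−3)/((k+1)(k+2)(k+3)) + 8·H_{k+2}/((k+1)(k+2)²), where H_{k+2} = Σ_{i=1}^{k+2} 1/i is the harmonic number. -/
open MeasureTheory

noncomputable section

/-- The triangle with vertices (0,0), (1,0), (0,1). -/
def T : Set (ℝ × ℝ) := convexHull ℝ {(0, 0), (1, 0), (0, 1)}

/-- The uniform distribution on `T`: twice Lebesgue measure restricted to `T`. -/
def μT : Measure (ℝ × ℝ) := (2 : ENNReal) • (volume.restrict T)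

/-- Joint law of `n` independent uniform points in `T`. -/
def P (n : ℕ) : Measure (Fin n → ℝ × ℝ) := Measure.pi fun _ => μT

/-- The random convex chain: convex hull of the points together with `(1,0)` and `(0,1)`. -/
def Tchain (n : ℕ) (ω : Fin n → ℝ × ℝ) : Set (ℝ × ℝ) :=
  convexHull ℝ (Set.range ω ∪ {(1, 0), (0, 1)})

/-- Normalized area `V_n = 2 vol(T_n)`. -/
def V (n : ℕ) (ω : Fin n → ℝ × ℝ) : ℝ := 2 * (volume (Tchain n ω)).toReal

/-- Number of vertices of `T_n` other than the two corners. -/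
def N (n : ℕ) (ω : Fin n → ℝ × ℝ) : ℕ :=
  (Set.extremePoints ℝ (Tchain n ω)).ncard - 2

/-- Normalized moments `q_{n,k} = C(n+k,k) E[V_n^k]`. -/
def q (n k : ℕ) : ℝ := ((n + k).choose k : ℝ) * ∫ ω, (V n ω) ^ k ∂ P n

/-- Probability generating function of `N_n`. -/
def G (n : ℕ) (t : ℝ) : ℝ := ∫ ω, t ^ (N n ω) ∂ P n

/-- Harmonic number. -/
def H (j : ℕ) : ℝ := ∑ i ∈ Finset.range j, 1 / ((i : ℝ) + 1)

/-- Generalized harmonic number of order 2. -/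
def H2 (j : ℕ) : ℝ := ∑ i ∈ Finset.range j, 1 / ((i : ℝ) + 1) ^ 2

/-- `c(k,ℓ)`: elementary symmetric polynomial `e_k` of `2/(j(j+1))`, `j = 1,…,ℓ`. -/
def c (k l : ℕ) : ℝ :=
  ∑ S ∈ (Finset.Icc 1 l).powersetCard k, ∏ j ∈ S, 2 / ((j : ℝ) * ((j : ℝ) + 1))


lemma lin_int (f : ℝ → ℝ) (α β s e : ℝ) (hse : s ≤ e) (h : ∀ x ∈ Set.Icc s e, f x = α + β * x) :
    ∫ x in s..e, f x = α * (e - s) + β * ((e^2 - s^2) / 2) := by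
  have : ∫ x in s..e, f x = ∫ x in s..e, (α + β * x) := by
    apply intervalIntegral.integral_congr
    intro x hx
    rw [Set.uIcc_of_le hse] at hx
    exact h x hx
  rw [this, intervalIntegral.integral_add (Continuous.intervalIntegrable (by fun_prop) _ _) (Continuous.intervalIntegrable (by fun_prop) _ _)]
  rw [intervalIntegral.integral_const_mul, integral_id, intervalIntegral.integral_const, smul_eq_mul]
  ring

/-- halfplanes `α x + β y ≤ γ` are convex -/
lemma hp_convex (α β γ : ℝ) : Convex ℝ {z : ℝ × ℝ | α * z.1 + β * z.2 ≤ γ} := by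
  intro x hx y hy s t hs ht hst
  simp only [Set.mem_ofPred_eq, Prod.fst_add, Prod.snd_add, Prod.smul_fst, Prod.smul_snd, smul_eq_mul] at *
  have : γ = s * γ + t * γ := by rw [← add_mul, hst, one_mul]
  nlinarith [mul_le_mul_of_nonneg_left hx hs, mul_le_mul_of_nonneg_left hy ht]

/-- vertical between -/
lemma conv_vert {K : Set (ℝ × ℝ)} (hK : Convex ℝ K) {t y0 y1 y : ℝ} (h0 : (t, y0) ∈ K) (h1 : (t, y1) ∈ K)
    (hy0 : y0 ≤ y) (hy1 : y ≤ y1) : (t, y) ∈ K := by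
  rcases eq_or_lt_of_le (hy0.trans hy1) with h | h
  · have : y = y0 := by linarith
    rwa [this]
  · have hd : 0 < y1 - y0 := by linarith
    have := hK h0 h1 (a := (y1 - y) / (y1 - y0)) (b := (y - y0) / (y1 - y0))
      (div_nonneg (by linarith) hd.le) (div_nonneg (by linarith) hd.le) (by field_simp; ring)
    convert this using 1
    ext
    · simp; field_simp; ring
    · simp; field_simp; ring

/-- point on a chord -/
lemma conv_chord {K : Set (ℝ × ℝ)} (hK : Convex ℝ K) {t0 t1 y0 y1 t : ℝ} (h0 : (t0, y0) ∈ K)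
    (h1 : (t1, y1) ∈ K) (hlt : t0 < t1) (ht0 : t0 ≤ t) (ht1 : t ≤ t1) :
    (t, y0 + (t - t0) * ((y1 - y0) / (t1 - t0))) ∈ K := by
  have hd : 0 < t1 - t0 := by linarith
  have := hK h0 h1 (a := (t1 - t) / (t1 - t0)) (b := (t - t0) / (t1 - t0))
      (div_nonneg (by linarith) hd.le) (div_nonneg (by linarith) hd.le) (by field_simp; ring)
  convert this using 1
  ext
  · simp; field_simp; ring
  · simp; field_simp; ring

def hull4 (p q : ℝ × ℝ) : Set (ℝ × ℝ) := convexHull ℝ {p, q, (1, 0), (0, 1)}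

set_option maxHeartbeats 1000000 in
lemma area_chain (a b c d : ℝ) (hc : 0 < c) (hca : c < a) (ha : a < 1)
    (hb : 0 ≤ b) (hab : a + b ≤ 1) (hcd : c + d ≤ 1)
    (h1 : b * (1 - c) ≤ d * (1 - a)) (h2 : c * (1 - b) ≤ a * (1 - d)) :
    (volume (hull4 (a, b) (c, d))).toReal = ((1 - b) * (1 - c) - a * d) / 2 := by
  set K := hull4 (a, b) (c, d) with hKdef
  have hK : Convex ℝ K := convex_convexHull ℝ _
  have hKm : MeasurableSet K :=
    ((Set.toFinite _).isCompact_convexHull ℝ).isClosed.measurableSet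
  have sub : ({(a, b), (c, d), (1, 0), (0, 1)} : Set (ℝ × ℝ)) ⊆ K := subset_convexHull ℝ _
  have mp : (a, b) ∈ K := sub (by simp)
  have mq : (c, d) ∈ K := sub (by simp)
  have mA : ((1:ℝ), (0:ℝ)) ∈ K := sub (by simp)
  have mB : ((0:ℝ), (1:ℝ)) ∈ K := sub (by simp)
  have hp : ∀ α β γ : ℝ, α * a + β * b ≤ γ → α * c + β * d ≤ γ → α ≤ γ → β ≤ γ →
      ∀ t y, (t, y) ∈ K → α * t + β * y ≤ γ := by
    intro α β γ e1 e2 e3 e4 t y hty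
    have : K ⊆ {z : ℝ × ℝ | α * z.1 + β * z.2 ≤ γ} := by
      apply convexHull_min _ (hp_convex α β γ)
      intro z hz
      simp only [Set.mem_insert_iff, Set.mem_singleton_iff] at hz
      rcases hz with rfl | rfl | rfl | rfl <;> simp <;> assumption
    exact this hty
  set m1 := (d - 1) / (c - 0) with hm1
  set m2 := (b - d) / (a - c) with hm2
  set m3 := (0 - b) / (1 - a) with hm3
  have em1 : m1 * c = d - 1 := by rw [hm1, sub_zero, div_mul_cancel₀ _ hc.ne']
  have em2 : m2 * (a - c) = b - d := by rw [hm2]; field_simp [sub_ne_zero.2 hca.ne']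
  have em3 : m3 * (1 - a) = - b := by rw [hm3]; field_simp [sub_ne_zero.2 ha.ne']; ring
  have hca' : 0 < a - c := by linarith
  have ha' : 0 < 1 - a := by linarith
  -- slopes are increasing
  have m12 : m1 ≤ m2 := by
    rw [hm1, hm2, div_le_div_iff₀ (by linarith) hca']; nlinarith
  have m23 : m2 ≤ m3 := by
    rw [hm3, hm2, div_le_div_iff₀ hca' ha']; nlinarith
  have m3le : m3 ≤ 0 := by
    rw [hm3]; exact div_nonpos_of_nonpos_of_nonneg (by linarith) ha'.le
  have m3ge : -1 ≤ m3 := by rw [hm3, le_div_iff₀ ha']; linarith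
  have m1le : m1 ≤ -1 := by rw [hm1, div_le_iff₀ (by linarith)]; linarith
  set l1 : ℝ → ℝ := fun t => 1 + (t - 0) * m1 with hl1
  set l2 : ℝ → ℝ := fun t => d + (t - c) * m2 with hl2
  set l3 : ℝ → ℝ := fun t => b + (t - a) * m3 with hl3
  set f : ℝ → ℝ := fun t => max (l1 t) (max (l2 t) (l3 t)) with hf
  have l12 : ∀ t, l2 t - l1 t = (t - c) * (m2 - m1) := by
    intro t; simp only [hl1, hl2]; linear_combination -em1
  have l23 : ∀ t, l3 t - l2 t = (t - a) * (m3 - m2) := by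
    intro t; simp only [hl3, hl2]; linear_combination -em2
  have f1 : ∀ t, t ≤ c → f t = l1 t := by
    intro t ht
    have A := l12 t
    have B := l23 t
    have : l2 t ≤ l1 t := by nlinarith
    have : l3 t ≤ l2 t := by nlinarith
    simp only [hf]; rw [max_eq_left (max_le ‹_› (by linarith))]
  have f2 : ∀ t, c ≤ t → t ≤ a → f t = l2 t := by
    intro t ht ht'
    have A := l12 t
    have B := l23 t
    have : l1 t ≤ l2 t := by nlinarith
    have : l3 t ≤ l2 t := by nlinarith
    simp only [hf]; rw [max_eq_left ‹l3 t ≤ l2 t›, max_eq_right ‹_›]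
  have f3 : ∀ t, a ≤ t → f t = l3 t := by
    intro t ht
    have A := l12 t
    have B := l23 t
    have : l1 t ≤ l2 t := by nlinarith
    have : l2 t ≤ l3 t := by nlinarith
    simp only [hf]; rw [max_eq_right ‹l2 t ≤ l3 t›, max_eq_right (by linarith)]
  have slice : ∀ t, t ∈ Set.Icc (0:ℝ) 1 → Prod.mk t ⁻¹' K = Set.Icc (f t) (1 - t) := by
    rintro t ⟨ht0, ht1⟩
    ext y
    simp only [Set.mem_preimage, Set.mem_Icc]
    constructor
    · intro h
      have := hp 1 1 1 (by linarith) (by linarith) le_rfl le_rfl t y h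
      refine ⟨?_, by linarith⟩
      have := hp m1 (-1) (-1) (by have := l12 a; simp only [hl1, hl2] at this; nlinarith) (by linarith) m1le le_rfl t y h
      have := hp m2 (-1) (m2 * c - d) (by linarith) (by linarith) (by nlinarith) (by nlinarith) t y h
      have := hp m3 (-1) (m3 * a - b) (by linarith) (by nlinarith) (by linarith) (by nlinarith) t y h
      simp only [hf, hl1, hl2, hl3]
      refine max_le ?_ (max_le ?_ ?_) <;> linarith
    · rintro ⟨e1, e2⟩
      have top : (t, 1 - t) ∈ K := by
        have := conv_chord hK mB mA one_pos ht0 ht1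
        convert this using 2; ring
      refine conv_vert hK ?_ top e1 e2
      rcases le_total t c with h | h
      · rw [f1 t h]; exact conv_chord hK mB mq hc ht0 h
      rcases le_total t a with h' | h'
      · rw [f2 t h h']; exact conv_chord hK mq mp hca h h'
      · rw [f3 t h']; exact conv_chord hK mp mA ha h' ht1
  have slice' : ∀ t, t ∉ Set.Icc (0:ℝ) 1 → Prod.mk t ⁻¹' K = ∅ := by
    intro t ht
    ext y
    simp only [Set.mem_preimage, Set.mem_empty_iff_false, iff_false]
    intro h
    apply ht
    have := hp 1 0 1 (by linarith) (by linarith) (by linarith) (by linarith) t y h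
    have := hp (-1) 0 0 (by linarith) (by linarith) (by linarith) (by linarith) t y h
    constructor <;> linarith
  have hfc : Continuous f := by fun_prop
  have hg0 : ∀ t ∈ Set.Icc (0:ℝ) 1, 0 ≤ 1 - t - f t := by
    rintro t ⟨ht0, ht1⟩
    have : f t ≤ 1 - t := by
      rcases le_total t c with h | h
      · rw [f1 t h]; simp only [hl1]; nlinarith
      rcases le_total t a with h' | h'
      · rw [f2 t h h']; simp only [hl2]
        have : (t - c) * (a - c) * m2 = (t - c) * (b - d) := by rw [mul_assoc, mul_comm (a - c), em2]
        have : (d + (t - c) * m2) * (a - c) ≤ (1 - t) * (a - c) := by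
          linarith [mul_nonneg (sub_nonneg.2 h) (sub_nonneg.2 hab), mul_nonneg (sub_nonneg.2 h') (sub_nonneg.2 hcd)]
        exact le_of_mul_le_mul_right this hca'
      · rw [f3 t h']; simp only [hl3]; nlinarith
    linarith
  have hvol : volume K = ENNReal.ofReal (∫ t in (0:ℝ)..1, (1 - t - f t)) := by
    rw [Measure.volume_eq_prod, Measure.prod_apply hKm,
      intervalIntegral.integral_of_le zero_le_one, ← integral_Icc_eq_integral_Ioc,
      ofReal_integral_eq_lintegral_ofReal, ← lintegral_indicator measurableSet_Icc]
    · congr 1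
      ext t
      by_cases ht : t ∈ Set.Icc (0:ℝ) 1
      · rw [slice t ht, Set.indicator_of_mem ht, Real.volume_Icc]
      · rw [slice' t ht, Set.indicator_of_notMem ht, measure_empty]
    · exact (Continuous.integrableOn_Icc (by fun_prop))
    · exact (ae_restrict_iff' measurableSet_Icc).2 (Filter.Eventually.of_forall hg0)
  have hval : ∫ t in (0:ℝ)..1, (1 - t - f t) = ((1 - b) * (1 - c) - a * d) / 2 := by
    have hi : ∀ s e, IntervalIntegrable (fun t => 1 - t - f t) volume s e := fun s e =>
      Continuous.intervalIntegrable (by fun_prop) _ _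
    rw [← intervalIntegral.integral_add_adjacent_intervals (hi 0 c) (hi c 1),
      ← intervalIntegral.integral_add_adjacent_intervals (hi c a) (hi a 1),
      lin_int _ 0 (-1 - m1) 0 c hc.le, lin_int _ (1 - d + c * m2) (-1 - m2) c a hca.le,
      lin_int _ (1 - b + a * m3) (-1 - m3) a 1 ha.le]
    · linear_combination (-c/2) * em1 + (-(a-c)/2) * em2 + (-(1-a)/2) * em3
    · rintro x ⟨h, -⟩; rw [f3 x h]; simp only [hl3]; ring
    · rintro x ⟨h, h'⟩; rw [f2 x h h']; simp only [hl2]; ring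
    · rintro x ⟨-, h⟩; rw [f1 x h]; simp only [hl1]; ring
  rw [hvol, ENNReal.toReal_ofReal, hval]
  exact intervalIntegral.integral_nonneg zero_le_one hg0

lemma hull4_congr {p q p' q' : ℝ × ℝ} (h1 : p ∈ hull4 p' q') (h2 : q ∈ hull4 p' q')
    (h3 : p' ∈ hull4 p q) (h4 : q' ∈ hull4 p q) : hull4 p q = hull4 p' q' := by
  apply Set.Subset.antisymm
  · apply convexHull_min _ (convex_convexHull ℝ _)
    intro z hz
    simp only [Set.mem_insert_iff, Set.mem_singleton_iff] at hz
    rcases hz with rfl | rfl | rfl | rfl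
    · exact h1
    · exact h2
    all_goals exact subset_convexHull ℝ _ (by simp)
  · apply convexHull_min _ (convex_convexHull ℝ _)
    intro z hz
    simp only [Set.mem_insert_iff, Set.mem_singleton_iff] at hz
    rcases hz with rfl | rfl | rfl | rfl
    · exact h3
    · exact h4
    all_goals exact subset_convexHull ℝ _ (by simp)

lemma hull4_top (p q : ℝ × ℝ) {t : ℝ} (h0 : 0 ≤ t) (h1 : t ≤ 1) : (t, 1 - t) ∈ hull4 p q := by
  have mA : ((1:ℝ), (0:ℝ)) ∈ hull4 p q := subset_convexHull ℝ _ (by simp)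
  have mB : ((0:ℝ), (1:ℝ)) ∈ hull4 p q := subset_convexHull ℝ _ (by simp)
  have := conv_chord (K := hull4 p q) (convex_convexHull ℝ _) mB mA one_pos h0 h1
  convert this using 2; ring

lemma d2_of_d1 {a b c d : ℝ} (hc : 0 < c) (hca : c < a) (ha : a < 1) (hcd : c + d ≤ 1)
    (h : d * (1 - a) ≤ b * (1 - c)) : c * (1 - b) ≤ a * (1 - d) := by
  have h1 : 0 ≤ (a - c) * (1 - c - d) := mul_nonneg (by linarith) (by linarith)
  have h2 : 0 ≤ c * (b * (1 - c) - d * (1 - a)) := mul_nonneg hc.le (by linarith)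
  have : 0 ≤ (1 - c) * (a * (1 - d) - c * (1 - b)) := by nlinarith
  have := nonneg_of_mul_nonneg_right this (by linarith)
  linarith

lemma d1_of_d2 {a b c d : ℝ} (hc : 0 < c) (hca : c < a) (ha : a < 1) (hcd : c + d ≤ 1)
    (h : a * (1 - d) ≤ c * (1 - b)) : b * (1 - c) ≤ d * (1 - a) := by
  have h1 : 0 ≤ (a - c) * (1 - c - d) := mul_nonneg (by linarith) (by linarith)
  have h2 : 0 ≤ (1 - c) * (c * (1 - b) - a * (1 - d)) := mul_nonneg (by linarith) (by linarith)
  have : 0 ≤ c * (d * (1 - a) - b * (1 - c)) := by nlinarith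
  have := nonneg_of_mul_nonneg_right this hc
  linarith

lemma area_z1 (a b c d : ℝ) (hc : 0 < c) (hca : c < a) (ha : a < 1)
    (hab : a + b ≤ 1) (hd : 0 ≤ d) (hcd : c + d ≤ 1)
    (h1 : d * (1 - a) ≤ b * (1 - c)) :
    (volume (hull4 (a, b) (c, d))).toReal = (1 - c - d) / 2 := by
  have hc1 : 0 < 1 - c := by linarith
  set b' := d + (a - c) * ((0 - d) / (1 - c)) with hb'
  have eb : b' * (1 - c) = d * (1 - a) := by rw [hb']; field_simp; ring
  have hb'0 : 0 ≤ b' := by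
    refine nonneg_of_mul_nonneg_left (b := 1 - c) ?_ hc1
    rw [eb]; exact mul_nonneg hd (by linarith)
  have hbb : b' ≤ b := le_of_mul_le_mul_right (by linarith) hc1
  have : hull4 (a, b) (c, d) = hull4 (a, b') (c, d) := by
    apply hull4_congr
    · exact conv_vert (convex_convexHull ℝ _) (y0 := b') (y1 := 1 - a)
        (subset_convexHull ℝ _ (by simp)) (hull4_top _ _ (by linarith) ha.le) hbb (by linarith)
    · exact subset_convexHull ℝ _ (by simp)
    · exact conv_chord (convex_convexHull ℝ _) (subset_convexHull ℝ _ (by simp))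
        (subset_convexHull ℝ _ (by simp)) (by linarith) hca.le ha.le
    · exact subset_convexHull ℝ _ (by simp)
  rw [this, area_chain a b' c d hc hca ha hb'0 (by linarith) hcd eb.le
    (d2_of_d1 hc hca ha hcd eb.ge)]
  linear_combination (-1/2) * eb

lemma area_z3 (a b c d : ℝ) (hc : 0 < c) (hca : c < a) (ha : a < 1)
    (hb : 0 ≤ b) (hab : a + b ≤ 1) (hcd : c + d ≤ 1)
    (h1 : a * (1 - d) ≤ c * (1 - b)) :
    (volume (hull4 (a, b) (c, d))).toReal = (1 - a - b) / 2 := by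
  have ha0 : 0 < a := by linarith
  set d' := 1 + (c - 0) * ((b - 1) / (a - 0)) with hd'
  have ed : a * (1 - d') = c * (1 - b) := by rw [hd']; simp only [sub_zero]; field_simp; ring
  have hdd : d' ≤ d := by
    have := le_of_mul_le_mul_left (by linarith : a * (1 - d) ≤ a * (1 - d')) ha0
    linarith
  have : hull4 (a, b) (c, d) = hull4 (a, b) (c, d') := by
    apply hull4_congr
    · exact subset_convexHull ℝ _ (by simp)
    · exact conv_vert (convex_convexHull ℝ _) (y0 := d') (y1 := 1 - c)
        (subset_convexHull ℝ _ (by simp)) (hull4_top _ _ hc.le (by linarith)) hdd (by linarith)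
    · exact subset_convexHull ℝ _ (by simp)
    · exact conv_chord (convex_convexHull ℝ _) (subset_convexHull ℝ _ (by simp))
        (subset_convexHull ℝ _ (by simp)) (by linarith) hc.le hca.le
  rw [this, area_chain a b c d' hc hca ha hb hab (by linarith)
    (d1_of_d2 hc hca ha (by linarith) ed.le) ed.ge]
  linear_combination (1/2) * ed

/-- The closed formula for twice the area. -/
def Wf (a b c d : ℝ) : ℝ :=
  max (max (1 - a - b) (1 - c - d)) (max ((1 - b) * (1 - c) - a * d) ((1 - d) * (1 - a) - c * b))

lemma Wf_symm (a b c d : ℝ) : Wf a b c d = Wf c d a b := by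
  unfold Wf
  rw [max_comm (1 - a - b), max_comm ((1 - b) * (1 - c) - a * d)]

lemma Wf_z1 {a b c d : ℝ} (h1 : d * (1 - a) ≤ b * (1 - c)) (h2 : c * (1 - b) ≤ a * (1 - d)) :
    Wf a b c d = 1 - c - d := by
  unfold Wf
  apply le_antisymm
  · refine max_le (max_le ?_ ?_) (max_le ?_ ?_) <;> linarith
  · exact (le_max_right _ _).trans (le_max_left _ _)

lemma Wf_z3 {a b c d : ℝ} (h1 : b * (1 - c) ≤ d * (1 - a)) (h2 : a * (1 - d) ≤ c * (1 - b)) :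
    Wf a b c d = 1 - a - b := by
  unfold Wf
  apply le_antisymm
  · refine max_le (max_le ?_ ?_) (max_le ?_ ?_) <;> linarith
  · exact (le_max_left _ _).trans (le_max_left _ _)

lemma Wf_z2 {a b c d : ℝ} (h1 : b * (1 - c) ≤ d * (1 - a)) (h2 : c * (1 - b) ≤ a * (1 - d)) :
    Wf a b c d = (1 - b) * (1 - c) - a * d := by
  unfold Wf
  apply le_antisymm
  · refine max_le (max_le ?_ ?_) (max_le ?_ ?_) <;> linarith
  · exact (le_max_left _ _).trans (le_max_right _ _)

lemma area_Wf (a b c d : ℝ) (hc : 0 < c) (hca : c < a) (ha : a < 1)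
    (hb : 0 ≤ b) (hab : a + b ≤ 1) (hd : 0 ≤ d) (hcd : c + d ≤ 1) :
    2 * (volume (hull4 (a, b) (c, d))).toReal = Wf a b c d := by
  rcases le_total (d * (1 - a)) (b * (1 - c)) with h1 | h1
  · rw [area_z1 a b c d hc hca ha hab hd hcd h1, Wf_z1 h1 (d2_of_d1 hc hca ha hcd h1)]; ring
  rcases le_total (a * (1 - d)) (c * (1 - b)) with h2 | h2
  · rw [area_z3 a b c d hc hca ha hb hab hcd h2, Wf_z3 h1 h2]; ring
  · rw [area_chain a b c d hc hca ha hb hab hcd h1 h2, Wf_z2 h1 h2]; ring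

lemma hull4_comm (p q : ℝ × ℝ) : hull4 p q = hull4 q p := by
  unfold hull4; rw [Set.insert_comm]

lemma area_Wf' (a b c d : ℝ) (hc : 0 < c) (hc1 : c < 1) (hca : c ≠ a) (ha0 : 0 < a) (ha : a < 1)
    (hb : 0 ≤ b) (hab : a + b ≤ 1) (hd : 0 ≤ d) (hcd : c + d ≤ 1) :
    2 * (volume (hull4 (a, b) (c, d))).toReal = Wf a b c d := by
  rcases lt_or_gt_of_ne hca with h | h
  · exact area_Wf a b c d hc h ha hb hab hd hcd
  · rw [hull4_comm, Wf_symm]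
    exact area_Wf c d a b ha0 h hc1 hd hcd hb hab

lemma Wf_cont : Continuous (fun z : (ℝ × ℝ) × (ℝ × ℝ) => Wf z.1.1 z.1.2 z.2.1 z.2.2) := by
  unfold Wf; fun_prop

lemma pow_int (α β s e : ℝ) (hβ : β ≠ 0) (k : ℕ) :
    ∫ x in s..e, (α - β * x) ^ k = ((α - β * s) ^ (k + 1) - (α - β * e) ^ (k + 1)) / ((k + 1) * β) := by
  rw [intervalIntegral.integral_comp_sub_mul (fun x => x ^ k) hβ, integral_pow, smul_eq_mul]
  have : (k : ℝ) + 1 ≠ 0 := by positivity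
  field_simp

lemma congr_oo {f g : ℝ → ℝ} {s e : ℝ} (hse : s ≤ e) (h : ∀ x, s < x → x < e → f x = g x) :
    ∫ x in s..e, f x = ∫ x in s..e, g x := by
  rw [intervalIntegral.integral_of_le hse, intervalIntegral.integral_of_le hse,
    integral_Ioc_eq_integral_Ioo, integral_Ioc_eq_integral_Ioo]
  exact setIntegral_congr_fun measurableSet_Ioo (fun x hx => h x hx.1 hx.2)

lemma int_d (k : ℕ) (a b c : ℝ) (hc : 0 < c) (hca : c < a) (ha : a < 1)
    (hb : 0 ≤ b) (hab : a + b ≤ 1) :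
    ∫ d in (0:ℝ)..(1 - c), Wf a b c d ^ k =
      (1 - c) ^ (k + 1) / (k + 1) + (-((1 - c) / (1 - a)) ^ (k + 1) / (k + 1)
        + (((1 - c) / (1 - a)) ^ (k + 1) - 1) / ((k + 1) * a) + c / a) * (1 - a - b) ^ (k + 1) := by
  have hc1 : 0 < 1 - c := by linarith
  have ha1 : 0 < 1 - a := by linarith
  have ha0 : 0 < a := by linarith
  have hk : (k : ℝ) + 1 ≠ 0 := by positivity
  obtain ⟨l, hl⟩ : ∃ l, l * (1 - a) = b * (1 - c) := ⟨b * (1 - c) / (1 - a), by field_simp⟩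
  obtain ⟨m, hm⟩ : ∃ m, a * (1 - m) = c * (1 - b) := ⟨1 - c * (1 - b) / a, by field_simp; ring⟩
  have hl0 : 0 ≤ l := nonneg_of_mul_nonneg_left (by rw [hl]; positivity) ha1
  have hl1 : l ≤ 1 - c := by
    refine le_of_mul_le_mul_right (a := 1 - a) ?_ ha1
    rw [hl, mul_comm]; exact mul_le_mul_of_nonneg_left (by linarith) hc1.le
  have hlm : l ≤ m := by
    have := d2_of_d1 (d := l) hc hca ha (by linarith) hl.le
    have := le_of_mul_le_mul_left (hm.trans_le this) ha0
    linarith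
  have hm1 : m ≤ 1 - c := by
    refine le_of_mul_le_mul_left (a := a) ?_ ha0
    nlinarith
  have hcont : Continuous (fun d => Wf a b c d ^ k) := by unfold Wf; fun_prop
  have hi : ∀ s e, IntervalIntegrable (fun d => Wf a b c d ^ k) volume s e := fun s e =>
      hcont.intervalIntegrable _ _
  have i1 : ∫ d in (0:ℝ)..l, Wf a b c d ^ k = ∫ d in (0:ℝ)..l, ((1 - c) - 1 * d) ^ k := by
    apply congr_oo hl0
    intro d h0 h1
    have : d * (1 - a) ≤ b * (1 - c) := by rw [← hl]; exact mul_le_mul_of_nonneg_right h1.le ha1.le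
    rw [Wf_z1 this (d2_of_d1 hc hca ha (by linarith) this), one_mul]
  have i2 : ∫ d in l..m, Wf a b c d ^ k = ∫ d in l..m, ((1 - b) * (1 - c) - a * d) ^ k := by
    apply congr_oo hlm
    intro d h0 h1
    rw [Wf_z2]
    · rw [← hl]; exact mul_le_mul_of_nonneg_right h0.le ha1.le
    · rw [← hm]; exact mul_le_mul_of_nonneg_left (by linarith) ha0.le
  have i3 : ∫ d in m..(1 - c), Wf a b c d ^ k = ∫ d in m..(1 - c), (1 - a - b) ^ k := by
    apply congr_oo hm1
    intro d h0 h1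
    have : a * (1 - d) ≤ c * (1 - b) := by
      rw [← hm]; exact mul_le_mul_of_nonneg_left (by linarith) ha0.le
    rw [Wf_z3 (d1_of_d2 hc hca ha (by linarith) this) this]
  rw [← intervalIntegral.integral_add_adjacent_intervals (hi 0 l) (hi l _),
    ← intervalIntegral.integral_add_adjacent_intervals (hi l m) (hi m _), i1, i2, i3,
    pow_int _ _ _ _ one_ne_zero, pow_int _ _ _ _ ha0.ne', intervalIntegral.integral_const, smul_eq_mul]
  have e1 : 1 - c - 1 * l = (1 - c) / (1 - a) * (1 - a - b) := by
    field_simp; linear_combination -hl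
  have e2 : (1 - b) * (1 - c) - a * l = (1 - c) / (1 - a) * (1 - a - b) := by
    field_simp; linear_combination (-a) * hl
  have e3 : (1 - b) * (1 - c) - a * m = 1 - a - b := by linear_combination hm
  have e4 : 1 - c - m = c / a * (1 - a - b) := by field_simp; linear_combination hm
  rw [e1, e2, e3, e4, mul_pow]
  field_simp
  ring

lemma int_bd (k : ℕ) (a c : ℝ) (hc : 0 < c) (hca : c < a) (ha : a < 1) :
    ∫ b in (0:ℝ)..(1 - a), ∫ d in (0:ℝ)..(1 - c), Wf a b c d ^ k =
      ((1 - a) / (k + 1) + (1 - a) ^ 2 / ((k + 1) * (k + 2) * a)) * (1 - c) ^ (k + 1)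
      + (-(1 - a) ^ (k + 2) / ((k + 1) * (k + 2) * a)
      + (1 - a) ^ (k + 2) / ((k + 2) * a) * c) := by
  have ha1 : 0 < 1 - a := by linarith
  have ha0 : 0 < a := by linarith
  have hk : (k : ℝ) + 1 ≠ 0 := by positivity
  have hk2 : (k : ℝ) + 2 ≠ 0 := by positivity
  rw [congr_oo ha1.le (fun b h0 h1 => int_d k a b c hc hca ha h0.le (by linarith)),
    intervalIntegral.integral_add (Continuous.intervalIntegrable (by fun_prop) _ _)
     (Continuous.intervalIntegrable (by fun_prop) _ _), intervalIntegral.integral_const,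
     intervalIntegral.integral_const_mul]
  have := pow_int (1 - a) 1 0 (1 - a) one_ne_zero (k + 1)
  simp only [one_mul, mul_zero, sub_zero, sub_self, mul_one] at this
  rw [this, smul_eq_mul, div_pow]
  push_cast
  rw [zero_pow (by omega)]
  have hk3 : (k : ℝ) + 1 + 1 ≠ 0 := by positivity
  field_simp
  ring

/-- The polynomial obtained after three integrations. -/
def Gv (k : ℕ) (v : ℝ) : ℝ := (v - v ^ (k + 3)) / ((k + 1) * (k + 2))
        + (∑ i ∈ Finset.range (k + 2), v ^ (i + 2)) / ((k + 1) * (k + 2) ^ 2)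
        - v ^ (k + 2) / ((k + 1) * (k + 2)) + (v ^ (k + 2) - v ^ (k + 3)) / (2 * (k + 2))

lemma int_cbd (k : ℕ) (a : ℝ) (ha0 : 0 < a) (ha : a < 1) :
    ∫ c in (0:ℝ)..a, ∫ b in (0:ℝ)..(1 - a), ∫ d in (0:ℝ)..(1 - c), Wf a b c d ^ k =
      Gv k (1 - a) := by
  have ha1 : 0 < 1 - a := by linarith
  have hk : (k : ℝ) + 1 ≠ 0 := by positivity
  have hk2 : (k : ℝ) + 2 ≠ 0 := by positivity
  rw [congr_oo ha0.le (fun c h0 h1 => int_bd k a c h0 h1 ha),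
    intervalIntegral.integral_add (Continuous.intervalIntegrable (by fun_prop) _ _)
     (Continuous.intervalIntegrable (by fun_prop) _ _),
     intervalIntegral.integral_const_mul,
     lin_int _ (-(1 - a) ^ (k + 2) / ((k + 1) * (k + 2) * a)) ((1 - a) ^ (k + 2) / ((k + 2) * a)) 0 a ha0.le
      (fun x _ => rfl)]
  have := pow_int 1 1 0 a one_ne_zero (k + 1)
  simp only [one_mul, mul_zero, sub_zero, one_pow, mul_one] at this
  rw [this]
  have hs : ∑ i ∈ Finset.range (k + 2), (1 - a) ^ (i + 2)
      = (1 - a) ^ 2 * (1 - (1 - a) ^ (k + 2)) / a := by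
    have := geom_sum_mul (1 - a) (k + 2)
    rw [eq_div_iff ha0.ne']
    have hp : ∑ i ∈ Finset.range (k + 2), (1 - a) ^ (i + 2)
        = (∑ i ∈ Finset.range (k + 2), (1 - a) ^ i) * (1 - a) ^ 2 := by
      rw [Finset.sum_mul]
      exact Finset.sum_congr rfl (fun i _ => pow_add _ _ _)
    rw [hp]
    linear_combination (-(1 - a) ^ 2) * this
  unfold Gv
  rw [hs]
  push_cast
  have hk3 : (k : ℝ) + 1 + 1 ≠ 0 := by positivity
  field_simp
  ring

lemma int_acbd (k : ℕ) :
    ∫ a in (0:ℝ)..1, ∫ c in (0:ℝ)..a, ∫ b in (0:ℝ)..(1 - a), ∫ d in (0:ℝ)..(1 - c), Wf a b c d ^ k =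
      (1 / 2 - 1 / (k + 4)) / ((k + 1) * (k + 2))
        + (∑ i ∈ Finset.range (k + 2), 1 / ((i : ℝ) + 3)) / ((k + 1) * (k + 2) ^ 2)
        - 1 / (k + 3) / ((k + 1) * (k + 2)) + (1 / (k + 3) - 1 / (k + 4)) / (2 * (k + 2)) := by
  rw [congr_oo zero_le_one (fun a h0 h1 => int_cbd k a h0 h1),
    intervalIntegral.integral_comp_sub_left (fun v => Gv k v), sub_self, sub_zero]
  unfold Gv
  have hi : ∀ f : ℝ → ℝ, Continuous f → IntervalIntegrable f volume 0 1 := fun f hf =>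
    hf.intervalIntegrable _ _
  rw [intervalIntegral.integral_add (hi _ (by fun_prop)) (hi _ (by fun_prop)),
    intervalIntegral.integral_sub (hi _ (by fun_prop)) (hi _ (by fun_prop)),
    intervalIntegral.integral_add (hi _ (by fun_prop)) (hi _ (by fun_prop))]
  simp only [intervalIntegral.integral_div]
  rw [intervalIntegral.integral_sub (hi _ (by fun_prop)) (hi _ (by fun_prop)),
    intervalIntegral.integral_sub (hi _ (by fun_prop)) (hi _ (by fun_prop)),
    intervalIntegral.integral_finsetSum (fun i _ => hi _ (by fun_prop))]
  simp only [integral_pow, integral_id]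
  have e : ∀ i : ℕ, ((1:ℝ) ^ (i + 2 + 1) - 0 ^ (i + 2 + 1)) / ((i + 2 : ℕ) + 1 : ℝ) = 1 / ((i:ℝ) + 3) := by
    intro i; rw [zero_pow (by omega), one_pow]; push_cast; ring
  rw [show k + 3 = (k + 1) + 2 by ring]
  simp only [e]
  push_cast
  rw [show (k : ℝ) + 1 + 3 = k + 4 by ring]
  norm_num

lemma sum_H (k : ℕ) : ∑ i ∈ Finset.range (k + 2), 1 / ((i : ℝ) + 3)
    = (∑ i ∈ Finset.range (k + 2), 1 / ((i : ℝ) + 1)) + 1 / (k + 3) + 1 / (k + 4) - 3 / 2 := by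
  induction k with
  | zero => simp [Finset.sum_range_succ]; norm_num
  | succ n ih =>
    rw [show n + 1 + 2 = (n + 2) + 1 by ring, Finset.sum_range_succ, ih, Finset.sum_range_succ _ (n + 2)]
    push_cast
    have h3 : (n : ℝ) + 3 ≠ 0 := by positivity
    have h4 : (n : ℝ) + 4 ≠ 0 := by positivity
    have h5 : (n : ℝ) + 5 ≠ 0 := by positivity
    rw [show (n:ℝ) + 2 + 3 = n + 5 by ring, show (n:ℝ) + 2 + 1 = n + 3 by ring,
      show (n:ℝ) + 1 + 3 = n + 4 by ring, show (n:ℝ) + 1 + 4 = n + 5 by ring]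
    ring

lemma final_arith (k : ℕ) (h : ℝ) :
    8 * ((1 / 2 - 1 / (k + 4)) / ((k + 1) * (k + 2))
        + (h + 1 / (k + 3) + 1 / (k + 4) - 3 / 2) / ((k + 1) * (k + 2) ^ 2)
        - 1 / (k + 3) / ((k + 1) * (k + 2)) + (1 / (k + 3) - 1 / (k + 4)) / (2 * (k + 2)))
    = 4 * ((k : ℝ) - 3) / (((k : ℝ) + 1) * ((k : ℝ) + 2) * ((k : ℝ) + 3))
        + 8 * h / (((k : ℝ) + 1) * ((k : ℝ) + 2) ^ 2) := by
  have h1 : (k : ℝ) + 1 ≠ 0 := by positivity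
  have h2 : (k : ℝ) + 2 ≠ 0 := by positivity
  have h3 : (k : ℝ) + 3 ≠ 0 := by positivity
  have h4 : (k : ℝ) + 4 ≠ 0 := by positivity
  field_simp
  ring

lemma T_eq : T = {z : ℝ × ℝ | 0 ≤ z.1 ∧ 0 ≤ z.2 ∧ z.1 + z.2 ≤ 1} := by
  apply Set.Subset.antisymm
  · apply convexHull_min
    · intro z hz
      simp only [Set.mem_insert_iff, Set.mem_singleton_iff] at hz
      rcases hz with rfl | rfl | rfl <;> simp
    · have h1 := hp_convex (-1) 0 0
      have h2 := hp_convex 0 (-1) 0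
      have h3 := hp_convex 1 1 1
      have h4 := h1.inter (h2.inter h3)
      have h5 : {z : ℝ × ℝ | 0 ≤ z.1 ∧ 0 ≤ z.2 ∧ z.1 + z.2 ≤ 1} = {z : ℝ × ℝ | -1 * z.1 + 0 * z.2 ≤ 0} ∩
          ({z : ℝ × ℝ | 0 * z.1 + -1 * z.2 ≤ 0} ∩ {z : ℝ × ℝ | 1 * z.1 + 1 * z.2 ≤ 1}) := by
        ext z
        simp
      rw [h5]
      exact h4
  · rintro ⟨x, y⟩ ⟨h1, h2, h3⟩
    simp only at h1 h2 h3
    have hK : Convex ℝ T := convex_convexHull ℝ _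
    have m0 : ((0:ℝ), (0:ℝ)) ∈ T := subset_convexHull ℝ _ (by simp)
    have mA : ((1:ℝ), (0:ℝ)) ∈ T := subset_convexHull ℝ _ (by simp)
    have mB : ((0:ℝ), (1:ℝ)) ∈ T := subset_convexHull ℝ _ (by simp)
    have e1 := conv_chord hK m0 mA one_pos h1 (by linarith)
    have e2 := conv_chord hK mB mA one_pos h1 (by linarith)
    refine conv_vert hK e1 e2 ?_ ?_ <;> norm_num <;> linarith

lemma T_compact : IsCompact T := (Set.toFinite _).isCompact_convexHull ℝ

lemma T_meas : MeasurableSet T := T_compact.isClosed.measurableSet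

lemma intT (f : ℝ × ℝ → ℝ) (hf : Continuous f) :
    ∫ z in T, f z = ∫ a in (0:ℝ)..1, ∫ b in (0:ℝ)..(1 - a), f (a, b) := by
  have hint : Integrable (T.indicator f) (volume.prod volume) := by
    rw [← Measure.volume_eq_prod, integrable_indicator_iff T_meas]
    exact hf.continuousOn.integrableOn_compact T_compact
  rw [← integral_indicator T_meas, Measure.volume_eq_prod, integral_prod _ hint,
    intervalIntegral.integral_of_le zero_le_one, ← integral_Icc_eq_integral_Ioc,
    ← integral_indicator measurableSet_Icc]
  congr 1
  ext a
  by_cases ha : a ∈ Set.Icc (0:ℝ) 1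
  · rw [Set.indicator_of_mem ha, intervalIntegral.integral_of_le (by linarith [ha.2]),
      ← integral_Icc_eq_integral_Ioc, ← integral_indicator measurableSet_Icc]
    congr 1
    ext b
    by_cases hb : b ∈ Set.Icc (0:ℝ) (1 - a)
    · rw [Set.indicator_of_mem hb, Set.indicator_of_mem]
      rw [T_eq]; exact ⟨ha.1, hb.1, by simp only; linarith [hb.2]⟩
    · rw [Set.indicator_of_notMem hb, Set.indicator_of_notMem]
      rw [T_eq]; rintro ⟨h1, h2, h3⟩; simp only at h1 h2 h3
      exact hb ⟨h2, by linarith⟩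
  · rw [Set.indicator_of_notMem ha]
    rw [← integral_zero ℝ ℝ]
    congr 1
    ext b
    rw [Set.indicator_of_notMem]
    rw [T_eq]; rintro ⟨h1, h2, h3⟩; simp only at h1 h2 h3
    exact ha ⟨h1, by linarith⟩

lemma int_on_box (f : ℝ → ℝ → ℝ) (hf : Continuous (Function.uncurry f)) (s e s' e' : ℝ) :
    Integrable (Function.uncurry f)
      ((volume.restrict (Set.Ioc s e)).prod (volume.restrict (Set.Ioc s' e'))) := by
  rw [Measure.prod_restrict]
  refine IntegrableOn.mono_set (t := Set.Icc s e ×ˢ Set.Icc s' e') ?_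
    (Set.prod_mono Set.Ioc_subset_Icc_self Set.Ioc_subset_Icc_self)
  exact hf.continuousOn.integrableOn_compact (isCompact_Icc.prod isCompact_Icc)

lemma ii_swap (f : ℝ → ℝ → ℝ) (hf : Continuous (Function.uncurry f)) {s e s' e' : ℝ}
    (h : s ≤ e) (h' : s' ≤ e') :
    ∫ x in s..e, ∫ y in s'..e', f x y = ∫ y in s'..e', ∫ x in s..e, f x y := by
  simp only [intervalIntegral.integral_of_le h, intervalIntegral.integral_of_le h']
  exact integral_integral_swap (int_on_box f hf _ _ _ _)

lemma tri_symm (F : ℝ → ℝ → ℝ) (hF : Continuous (Function.uncurry F)) 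
    (hs : ∀ x y, 0 ≤ x → x ≤ 1 → 0 ≤ y → y ≤ 1 → F x y = F y x) :
    ∫ a in (0:ℝ)..1, ∫ c in (0:ℝ)..1, F a c = 2 * ∫ a in (0:ℝ)..1, ∫ c in (0:ℝ)..a, F a c := by
  have hFa : ∀ a s e, IntervalIntegrable (F a) volume s e := fun a s e =>
    Continuous.intervalIntegrable (hF.comp (by fun_prop : Continuous fun c => (a, c))) _ _
  have c1 : Continuous fun a => ∫ c in (0:ℝ)..a, F a c :=
    intervalIntegral.continuous_parametric_intervalIntegral_of_continuous hF continuous_id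
  have c2 : Continuous fun a => ∫ c in (0:ℝ)..1, F a c :=
    intervalIntegral.continuous_parametric_intervalIntegral_of_continuous hF continuous_const
  have key : ∫ a in (0:ℝ)..1, ∫ c in a..1, F a c = ∫ a in (0:ℝ)..1, ∫ c in (0:ℝ)..a, F a c := by
    set I : ℝ → ℝ → ℝ := fun a c => {z : ℝ × ℝ | z.1 < z.2}.indicator (Function.uncurry F) (a, c) with hI
    have hm : MeasurableSet {z : ℝ × ℝ | z.1 < z.2} := measurableSet_lt measurable_fst measurable_snd
    have hint : Integrable (Function.uncurry I)
        ((volume.restrict (Set.Ioc (0:ℝ) 1)).prod (volume.restrict (Set.Ioc (0:ℝ) 1))) :=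
      (int_on_box F hF 0 1 0 1).indicator hm
    have sw := integral_integral_swap hint
    have e1 : ∫ a in (0:ℝ)..1, ∫ c in a..1, F a c
        = ∫ a in Set.Ioc (0:ℝ) 1, ∫ c in Set.Ioc (0:ℝ) 1, I a c := by
      rw [intervalIntegral.integral_of_le zero_le_one]
      refine setIntegral_congr_fun measurableSet_Ioc (fun a ha => ?_)
      rw [intervalIntegral.integral_of_le ha.2, ← integral_indicator measurableSet_Ioc,
        ← integral_indicator measurableSet_Ioc]
      congr 1
      ext c
      simp only [hI, Set.indicator_apply, Set.mem_Ioc, Set.mem_ofPred_eq, Function.uncurry]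
      have := ha.1
      split_ifs <;> first | rfl | (exfalso; grind)
    have e2 : ∫ a in (0:ℝ)..1, ∫ c in (0:ℝ)..a, F a c
        = ∫ c in Set.Ioc (0:ℝ) 1, ∫ a in Set.Ioc (0:ℝ) 1, I a c := by
      rw [intervalIntegral.integral_of_le zero_le_one]
      refine setIntegral_congr_fun measurableSet_Ioc (fun c hc => ?_)
      rw [intervalIntegral.integral_of_le hc.1.le, integral_Ioc_eq_integral_Ioo,
        ← integral_indicator measurableSet_Ioo, ← integral_indicator measurableSet_Ioc]
      congr 1
      ext a
      simp only [hI, Set.indicator_apply, Set.mem_Ioc, Set.mem_Ioo, Set.mem_ofPred_eq, Function.uncurry]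
      have := hc.1
      have := hc.2
      split_ifs <;> first | rfl | exact hs _ _ (by grind) (by grind) (by grind) (by grind) | (exfalso; grind)
    rw [e1, e2, sw]
  have : ∀ a, ∫ c in (0:ℝ)..1, F a c = (∫ c in (0:ℝ)..a, F a c) + ∫ c in a..1, F a c := fun a =>
    (intervalIntegral.integral_add_adjacent_intervals (hFa a 0 a) (hFa a a 1)).symm
  have c3 : Continuous fun a => ∫ c in a..1, F a c := by
    have : (fun a => ∫ c in a..1, F a c) = fun a => (∫ c in (0:ℝ)..1, F a c) - ∫ c in (0:ℝ)..a, F a c := by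
      ext a; rw [this a]; ring
    rw [this]; exact c2.sub c1
  simp only [this]
  rw [intervalIntegral.integral_add (c1.intervalIntegrable _ _) (c3.intervalIntegrable _ _), key]
  ring

lemma Tchain_two (ω : Fin 2 → ℝ × ℝ) : Tchain 2 ω = hull4 (ω 0) (ω 1) := by
  unfold Tchain hull4
  congr 1
  ext z
  simp [Fin.exists_fin_two, eq_comm]
  tauto

lemma ae_fst_ne (r : ℝ) : ∀ᵐ z : ℝ × ℝ, z.1 ≠ r := by
  have h : ∀ᵐ x : ℝ, x ≠ r := by simp [ae_iff]
  exact Measure.quasiMeasurePreserving_fst.ae h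

lemma ae_area (k : ℕ) : ∀ᵐ z ∂((volume.restrict T).prod (volume.restrict T)),
    (2 * (volume (hull4 z.1 z.2)).toReal) ^ k = Wf z.1.1 z.1.2 z.2.1 z.2.2 ^ k := by
  have hT : ∀ᵐ z ∂((volume.restrict T).prod (volume.restrict T)), z.1 ∈ T ∧ z.2 ∈ T := by
    rw [Measure.prod_restrict]
    filter_upwards [ae_restrict_mem (T_meas.prod T_meas)] with z hz using hz
  have hac : (volume.restrict T).prod (volume.restrict T) ≪ (volume : Measure ((ℝ × ℝ) × (ℝ × ℝ))) := by
    rw [Measure.prod_restrict]; exact Measure.absolutelyContinuous_of_le Measure.restrict_le_self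
  have f1 : ∀ r : ℝ, ∀ᵐ z : (ℝ × ℝ) × (ℝ × ℝ), z.1.1 ≠ r := fun r =>
    Measure.quasiMeasurePreserving_fst.ae (ae_fst_ne r)
  have f2 : ∀ r : ℝ, ∀ᵐ z : (ℝ × ℝ) × (ℝ × ℝ), z.2.1 ≠ r := fun r =>
    Measure.quasiMeasurePreserving_snd.ae (ae_fst_ne r)
  have f3 : ∀ᵐ z : (ℝ × ℝ) × (ℝ × ℝ), z.2.1 ≠ z.1.1 := by
    rw [Measure.volume_eq_prod, Measure.ae_prod_iff_ae_ae]
    · exact Filter.Eventually.of_forall (fun x => ae_fst_ne x.1)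
    · exact (measurableSet_eq_fun (by fun_prop) (by fun_prop)).compl
  filter_upwards [hT, hac.ae_le (f1 0), hac.ae_le (f1 1), hac.ae_le (f2 0), hac.ae_le (f2 1),
    hac.ae_le f3] with z hz h1 h2 h3 h4 h5
  obtain ⟨⟨a, b⟩, ⟨c, d⟩⟩ := z
  rw [T_eq] at hz
  obtain ⟨⟨ha, hb, hab⟩, ⟨hc, hd, hcd⟩⟩ := hz
  simp only at *
  rw [area_Wf' a b c d (lt_of_le_of_ne hc h3.symm) (lt_of_le_of_ne (by linarith) h4) h5
    (lt_of_le_of_ne ha h1.symm) (lt_of_le_of_ne (by linarith) h2) hb hab hd hcd]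

lemma EV_eq (k : ℕ) : ∫ ω, (V 2 ω) ^ k ∂ P 2 =
    4 * ∫ a in (0:ℝ)..1, ∫ b in (0:ℝ)..(1 - a), ∫ c in (0:ℝ)..1, ∫ d in (0:ℝ)..(1 - c),
      Wf a b c d ^ k := by
  have hfin : IsFiniteMeasure (volume.restrict T) :=
    ⟨by rw [Measure.restrict_apply_univ]; exact T_compact.measure_lt_top⟩
  have hfin' : IsFiniteMeasure μT := by
    unfold μT
    exact ⟨by
      rw [Measure.smul_apply, smul_eq_mul]
      exact ENNReal.mul_lt_top (by simp) (measure_lt_top _ _)⟩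
  have hc : Continuous (fun z : (ℝ × ℝ) × (ℝ × ℝ) => Wf z.1.1 z.1.2 z.2.1 z.2.2 ^ k) := Wf_cont.pow k
  have s1 : ∫ ω, (V 2 ω) ^ k ∂ P 2 =
      ∫ z, (2 * (volume (hull4 z.1 z.2)).toReal) ^ k ∂ (μT.prod μT) := by
    rw [← (measurePreserving_finTwoArrow μT).integral_comp']
    unfold P
    congr 1
    ext ω
    unfold V
    rw [Tchain_two]
    rfl
  have s2 : μT.prod μT = (4 : ENNReal) • ((volume.restrict T).prod (volume.restrict T)) := by
    unfold μT
    rw [Measure.prod_smul_left, Measure.prod_smul_right, smul_smul]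
    norm_num
  have hint : Integrable (fun z : (ℝ × ℝ) × (ℝ × ℝ) => Wf z.1.1 z.1.2 z.2.1 z.2.2 ^ k)
      ((volume.restrict T).prod (volume.restrict T)) := by
    rw [Measure.prod_restrict]
    exact hc.continuousOn.integrableOn_compact (T_compact.prod T_compact)
  rw [s1, s2, integral_smul_measure, integral_congr_ae (ae_area k), integral_prod _ hint]
  have e : ∀ x : ℝ × ℝ, ∫ y in T, Wf x.1 x.2 y.1 y.2 ^ k
      = ∫ c in (0:ℝ)..1, ∫ d in (0:ℝ)..(1 - c), Wf x.1 x.2 c d ^ k := fun x =>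
    intT (fun y => Wf x.1 x.2 y.1 y.2 ^ k) (hc.comp (by fun_prop : Continuous fun y => (x, y)))
  simp only [e]
  rw [intT (fun x => ∫ c in (0:ℝ)..1, ∫ d in (0:ℝ)..(1 - c), Wf x.1 x.2 c d ^ k)]
  · norm_num
  · refine intervalIntegral.continuous_parametric_intervalIntegral_of_continuous (X := ℝ × ℝ)
      (f := fun x c => ∫ d in (0:ℝ)..(1 - c), Wf x.1 x.2 c d ^ k) ?_ continuous_const
    refine intervalIntegral.continuous_parametric_intervalIntegral_of_continuous (X := (ℝ × ℝ) × ℝ)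
      (f := fun x d => Wf x.1.1 x.1.2 x.2 d ^ k) ?_ (by fun_prop)
    exact hc.comp (by fun_prop : Continuous fun z : ((ℝ × ℝ) × ℝ) × ℝ => (z.1.1, (z.1.2, z.2)))

lemma EV_eq' (k : ℕ) : ∫ ω, (V 2 ω) ^ k ∂ P 2 =
    8 * ∫ a in (0:ℝ)..1, ∫ c in (0:ℝ)..a, ∫ b in (0:ℝ)..(1 - a), ∫ d in (0:ℝ)..(1 - c),
      Wf a b c d ^ k := by
  have hc : Continuous (fun z : (ℝ × ℝ) × (ℝ × ℝ) => Wf z.1.1 z.1.2 z.2.1 z.2.2 ^ k) := Wf_cont.pow k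
  have c1 : Continuous (fun x : (ℝ × ℝ) × ℝ => ∫ d in (0:ℝ)..(1 - x.2), Wf x.1.1 x.1.2 x.2 d ^ k) := by
    refine intervalIntegral.continuous_parametric_intervalIntegral_of_continuous (X := (ℝ × ℝ) × ℝ)
      (f := fun x d => Wf x.1.1 x.1.2 x.2 d ^ k) ?_ (by fun_prop)
    exact hc.comp (by fun_prop : Continuous fun z : ((ℝ × ℝ) × ℝ) × ℝ => (z.1.1, (z.1.2, z.2)))
  have c2 : Continuous (Function.uncurry fun a c : ℝ =>
      ∫ b in (0:ℝ)..(1 - a), ∫ d in (0:ℝ)..(1 - c), Wf a b c d ^ k) := by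
    refine intervalIntegral.continuous_parametric_intervalIntegral_of_continuous (X := ℝ × ℝ)
      (f := fun x b => ∫ d in (0:ℝ)..(1 - x.2), Wf x.1 b x.2 d ^ k) ?_ (by fun_prop)
    exact c1.comp (by fun_prop : Continuous fun z : (ℝ × ℝ) × ℝ => ((z.1.1, z.2), z.1.2))
  have e : ∫ a in (0:ℝ)..1, ∫ b in (0:ℝ)..(1 - a), ∫ c in (0:ℝ)..1, ∫ d in (0:ℝ)..(1 - c),
      Wf a b c d ^ k = ∫ a in (0:ℝ)..1, ∫ c in (0:ℝ)..1, ∫ b in (0:ℝ)..(1 - a),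
      ∫ d in (0:ℝ)..(1 - c), Wf a b c d ^ k := by
    refine congr_oo zero_le_one (fun a h0 h1 => ?_)
    exact ii_swap (fun b c => ∫ d in (0:ℝ)..(1 - c), Wf a b c d ^ k)
      (c1.comp (by fun_prop : Continuous fun z : ℝ × ℝ => ((a, z.1), z.2))) (by linarith) zero_le_one
  have hsym : ∀ a c : ℝ, 0 ≤ a → a ≤ 1 → 0 ≤ c → c ≤ 1 →
      ∫ b in (0:ℝ)..(1 - a), ∫ d in (0:ℝ)..(1 - c), Wf a b c d ^ k
      = ∫ b in (0:ℝ)..(1 - c), ∫ d in (0:ℝ)..(1 - a), Wf c b a d ^ k := by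
    intro a c h0 h1 h2 h3
    rw [ii_swap (fun b d => Wf a b c d ^ k)
      (hc.comp (by fun_prop : Continuous fun z : ℝ × ℝ => ((a, z.1), (c, z.2)))) (by linarith) (by linarith)]
    simp only [Wf_symm a _ c _]
  rw [EV_eq, e, tri_symm _ c2 hsym]
  ring

/-- `E[V_2^k] = 4(k-3)/((k+1)(k+2)(k+3)) + 8 H_{k+2}/((k+1)(k+2)^2)`. -/
theorem stmt9 (k : ℕ) :
    ∫ ω, (V 2 ω) ^ k ∂ P 2
      = 4 * ((k : ℝ) - 3) / (((k : ℝ) + 1) * ((k : ℝ) + 2) * ((k : ℝ) + 3))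
        + 8 * H (k + 2) / (((k : ℝ) + 1) * ((k : ℝ) + 2) ^ 2) := by
  rw [EV_eq', int_acbd, sum_H, final_arith]
  rfl

end
end

section
/- For all integers n ≥ 1 and 0 ≤ k ≤ n, the probability that the random convex chain T_n has exactly k vertices besides the two corners is P(N_n = k) = Σ_{ℓ=k}^{n} (−1)^{ℓ+k}·C(n,ℓ)·c(k,ℓ). -/
open MeasureTheory

noncomputable section

def pf (n k : ℕ) : ℝ := ∑ l ∈ Finset.range (n + 1), (-1 : ℝ) ^ (l + k) * (n.choose l : ℝ) * c k l

lemma c_zero (l : ℕ) : c 0 l = 1 := by simp [c]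

lemma c_lt {k l : ℕ} (h : l < k) : c k l = 0 := by
  unfold c
  rw [Finset.powersetCard_eq_empty.2 (by simpa using h)]; simp

lemma c_succ (k l : ℕ) : c (k+1) (l+1) = c (k+1) l + 2 / (((l:ℝ)+1) * ((l:ℝ)+2)) * c k l := by
  unfold c
  have h : Finset.Icc 1 (l+1) = insert (l+1) (Finset.Icc 1 l) := by
    ext x; simp; omega
  have hn : (l+1) ∉ Finset.Icc 1 l := by simp
  rw [h, Finset.powersetCard_succ_insert hn, Finset.sum_union, Finset.sum_image]
  · congr 1
    rw [Finset.mul_sum]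
    refine Finset.sum_congr rfl fun S hS => ?_
    rw [Finset.prod_insert]
    · push_cast; ring
    · intro hh; exact hn ((Finset.mem_powersetCard.1 hS).1 hh)
  · intro S hS S' hS' hh
    have h1 : (l+1) ∉ S := fun hh => hn ((Finset.mem_powersetCard.1 hS).1 hh)
    have h2 : (l+1) ∉ S' := fun hh => hn ((Finset.mem_powersetCard.1 hS').1 hh)
    rw [← Finset.erase_insert h1, ← Finset.erase_insert h2, hh]
  · rw [Finset.disjoint_left]
    intro S hS hS'
    obtain ⟨S', _, rfl⟩ := Finset.mem_image.1 hS'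
    exact hn ((Finset.mem_powersetCard.1 hS).1 (Finset.mem_insert_self _ _))

lemma pf_eq (n k : ℕ) :
    ∑ l ∈ Finset.Icc k n, (-1 : ℝ) ^ (l + k) * (n.choose l : ℝ) * c k l = pf n k := by
  unfold pf
  apply Finset.sum_subset
  · intro x; simp
  · intro x hx0 hx
    rw [c_lt, mul_zero]
    simp at hx0 hx ⊢; omega

lemma pf_zero_zero : pf 0 0 = 1 := by simp [pf, c_zero]

lemma pf_zero_succ (k : ℕ) : pf 0 (k+1) = 0 := by simp [pf, c_lt]

lemma pf_succ_zero (n : ℕ) : pf (n+1) 0 = 0 := by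
  have := Int.alternating_sum_range_choose_of_ne (n := n+1) (by omega)
  have h2 : ((∑ m ∈ Finset.range (n+1+1), (-1:ℤ)^m * ((n+1).choose m : ℤ) : ℤ) : ℝ) = 0 := by
    rw [this]; simp
  unfold pf
  push_cast at h2
  simpa [c_zero] using h2

lemma sum_choose_weighted (n l : ℕ) :
    ∑ m ∈ Finset.range (n+1), ((n:ℝ)+1-m) * (m.choose l : ℝ) = ((n+2).choose (l+2) : ℝ) := by
  have h1 : ∀ n : ℕ, ∑ m ∈ Finset.range (n+1), (m.choose l : ℝ) = ((n+1).choose (l+1) : ℝ) := by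
    intro n
    induction n with
    | zero => cases l <;> simp [Nat.choose_eq_zero_of_lt]
    | succ n ih =>
      rw [Finset.sum_range_succ, ih, Nat.choose_succ_succ (n+1) l]; push_cast; ring
  induction n with
  | zero => cases l <;> simp [Nat.choose_eq_zero_of_lt]
  | succ n ih =>
    rw [Nat.choose_succ_succ (n+2) (l+1)]
    push_cast
    rw [← ih, ← h1 (n+1), Finset.sum_range_succ, Finset.sum_range_succ _ (n+1)]
    have : ∀ m ∈ Finset.range (n+1), ((n:ℝ)+1+1-m) * (m.choose l : ℝ) 
      = (m.choose l : ℝ) + ((n:ℝ)+1-m) * (m.choose l : ℝ) := by intros; ring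
    rw [Finset.sum_congr rfl this, Finset.sum_add_distrib]
    push_cast; ring

lemma choose_id (n l : ℕ) : ((n:ℝ)+1)*(n+2) * ((n+1).choose l : ℝ) =
    (l+1) * (l * ((n+2).choose (l+1)) + (l+2) * ((n+2).choose (l+2))) := by
  have h1 : ((n:ℝ)+2) * ((n+1).choose l : ℝ) = ((n+2).choose (l+1)) * (l+1) := by
    exact_mod_cast Nat.add_one_mul_choose_eq (n+1) l
  have h2 : ((n+2).choose (l+2) : ℝ) * (l+2) = ((n+2).choose (l+1)) * ((n:ℝ)+1-l) := by
    have := Nat.choose_succ_right_eq (n+2) (l+1)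
    by_cases h : l ≤ n + 1
    · have h3 : (((n+2) - (l+1) : ℕ) : ℝ) = (n:ℝ)+1-l := by
        rw [Nat.cast_sub (by omega)]; push_cast; ring
      rw [← h3]; exact_mod_cast this
    · rw [Nat.choose_eq_zero_of_lt (show n+2 < l+1 by omega), 
        Nat.choose_eq_zero_of_lt (show n+2 < l+2 by omega)]; simp
  linear_combination ((n:ℝ)+1) * h1 - (l+1) * h2

lemma pf_rec (n k : ℕ) : ((n:ℝ)+1)*(n+2) * pf (n+1) (k+1) =
    2 * ∑ m ∈ Finset.range (n+1), ((n:ℝ)+1-m) * pf m k := by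
  have e : ∀ m ∈ Finset.range (n+1), ((n:ℝ)+1-m) * pf m k = 
      ∑ l ∈ Finset.range (n+1), (-1 : ℝ) ^ (l + k) * c k l * (((n:ℝ)+1-m) * (m.choose l : ℝ)) := by
    intro m hm
    unfold pf
    rw [Finset.mul_sum]
    have hm' : m + 1 ≤ n + 1 := by simp at hm; omega
    rw [← Finset.sum_subset (Finset.range_mono hm')]
    · refine Finset.sum_congr rfl fun l _ => by ring
    · intro l _ hl
      rw [Nat.choose_eq_zero_of_lt (by simp at hl; omega)]; simp
  rw [Finset.sum_congr rfl e, Finset.sum_comm]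
  simp_rw [← Finset.mul_sum, sum_choose_weighted]
  unfold pf
  rw [Finset.mul_sum, Finset.mul_sum]
  have e2 : ∀ l ∈ Finset.range (n+1+1), ((n:ℝ)+1)*(n+2) * ((-1 : ℝ) ^ (l + (k+1)) * ((n+1).choose l : ℝ) * c (k+1) l)
     = (-1:ℝ)^(l+(k+1)) * c (k+1) l * (l+1) * l * ((n+2).choose (l+1)) 
       + (-1:ℝ)^(l+(k+1)) * c (k+1) l * (l+1) * (l+2) * ((n+2).choose (l+2)) := by
    intro l _
    linear_combination (-1:ℝ)^(l+(k+1)) * c (k+1) l * choose_id n l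
  rw [Finset.sum_congr rfl e2, Finset.sum_add_distrib, Finset.sum_range_succ', 
    Finset.sum_range_succ _ (n+1), Nat.choose_eq_zero_of_lt (show n+2 < n+1+2 by omega)]
  simp only [Nat.cast_zero, mul_zero, zero_mul, add_zero]
  rw [← Finset.sum_add_distrib]
  refine Finset.sum_congr rfl fun l _ => ?_
  rw [c_succ]
  have : ((l:ℝ)+1) ≠ 0 := by positivity
  have : ((l:ℝ)+2) ≠ 0 := by positivity
  push_cast
  field_simp
  ring

def pa : ℝ × ℝ := (1, 0)
def pb : ℝ × ℝ := (0, 1)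
def TO : Set (ℝ × ℝ) := {p | 0 < p.1 ∧ 0 < p.2 ∧ p.1 + p.2 < 1}
def f1 (v p : ℝ × ℝ) : ℝ := (1 - v.1) * p.2 - v.2 * (1 - p.1)
def g1 (v p : ℝ × ℝ) : ℝ := (1 - v.2) * p.1 + v.1 * p.2 - v.1

open Classical in
def cnt {ι : Type} [Fintype ι] (a b : ℝ × ℝ) (ω : ι → ℝ × ℝ) : ℕ :=
  ∑ i, if ω i ∈ convexHull ℝ (ω '' {j | j ≠ i} ∪ {a, b}) then 0 else 1

lemma mem_hull_insert {s : Set (ℝ × ℝ)} (hs : s.Nonempty) {x p : ℝ × ℝ} :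
    p ∈ convexHull ℝ (insert x s) ↔ ∃ q ∈ convexHull ℝ s, ∃ t : ℝ, 0 ≤ t ∧ t ≤ 1 ∧
      p.1 = (1 - t) * x.1 + t * q.1 ∧ p.2 = (1 - t) * x.2 + t * q.2 := by
  rw [convexHull_insert hs, mem_convexJoin]
  constructor
  · rintro ⟨y, rfl, q, hq, α, β, hα, hβ, hab, rfl⟩
    refine ⟨q, hq, β, hβ, by linarith, ?_, ?_⟩ <;> simp [← hab]
  · rintro ⟨q, hq, t, h0, h1, e1, e2⟩
    refine ⟨x, rfl, q, hq, 1 - t, t, by linarith, h0, by ring, ?_⟩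
    ext <;> simp [e1, e2]

lemma mem_hull_of_comb {s : Set (ℝ × ℝ)} {p q r : ℝ × ℝ} (hq : q ∈ convexHull ℝ s)
    (hr : r ∈ convexHull ℝ s) (t : ℝ) (h0 : 0 ≤ t) (h1 : t ≤ 1)
    (e1 : p.1 = (1 - t) * q.1 + t * r.1) (e2 : p.2 = (1 - t) * q.2 + t * r.2) :
    p ∈ convexHull ℝ s := by
  have := (convex_convexHull ℝ s) hq hr (show 0 ≤ 1 - t by linarith) h0 (by ring)
  convert this using 1
  ext <;> simp [e1, e2]

lemma geoA {v p : ℝ × ℝ} (hv : v ∈ TO) (hp : p ∈ TO) (hf : 0 < f1 v p) (hg : g1 v p < 0)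
    (S : Set (ℝ × ℝ)) (h : p ∈ convexHull ℝ (insert pa (S ∪ {v, pb}))) :
    p ∈ convexHull ℝ (S ∪ {v, pb}) := by
  obtain ⟨q, hq, t, h0, h1, e1, e2⟩ := (mem_hull_insert ⟨v, by simp⟩).1 h
  obtain ⟨x, y⟩ := v
  obtain ⟨p1, p2⟩ := p
  obtain ⟨q1, q2⟩ := q
  obtain ⟨hx, hy, hxy⟩ := hv
  obtain ⟨hp1, hp2, hpp⟩ := hp
  simp only [f1, g1, pa] at *
  have ht : t ≠ 0 := by rintro rfl; simp at e1 e2; linarith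
  have ht0 : 0 < t := lt_of_le_of_ne h0 (Ne.symm ht)
  obtain ⟨s, hs0, hs1, hK⟩ : ∃ s : ℝ, 0 < s ∧ s < 1 ∧
      s * (1 - y - (1 - y) * p1 - x * p2) = 1 - x - y := by
    have hDpos : 0 < 1 - y - (1 - y) * p1 - x * p2 := by linarith
    refine ⟨(1 - x - y) / (1 - y - (1 - y) * p1 - x * p2), div_pos (by linarith) hDpos, ?_, ?_⟩
    · rw [div_lt_one hDpos]; linarith
    · exact div_mul_cancel₀ _ hDpos.ne'
  have hr1 : 0 < 1 + s * (p1 - 1) := by nlinarith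
  -- the point r
  have hr : ((1 + s * (p1 - 1), s * p2) : ℝ × ℝ) ∈ convexHull ℝ (S ∪ {(x, y), pb}) := by
    refine mem_hull_of_comb (q := (x, y)) (r := pb) (subset_convexHull _ _ (by simp))
      (subset_convexHull _ _ (by simp)) (s * ((1 - x) * p2 - y * (1 - p1)) / (1 - x - y)) 
      ?_ ?_ ?_ ?_
    · apply div_nonneg
      · positivity
      · linarith
    · rw [div_le_one (by linarith)]
      have : x * (1 - x - y - s * ((1 - x) * p2 - y * (1 - p1))) 
          = (1 - x - y) * (1 + s * (p1 - 1)) := by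
        linear_combination (1 - x) * hK
      have h3 : 0 < (1 - x - y) * (1 + s * (p1 - 1)) := mul_pos (by linarith) hr1
      rw [← this] at h3
      have := (mul_pos_iff_of_pos_left hx).1 h3
      linarith
    · have : 1 - x - y ≠ 0 := by linarith
      simp only [pb]
      field_simp
      linear_combination (-(1-x)) * hK
    · have : 1 - x - y ≠ 0 := by linarith
      simp only [pb]
      field_simp
      linear_combination y * hK
  -- p between r and q
  refine mem_hull_of_comb hr hq ((1 - s) / (1 / t - s)) ?_ ?_ ?_ ?_
  all_goals have h1t : 1 ≤ 1 / t := by rw [le_div_iff₀ ht0]; linarith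
  all_goals have hpos : 0 < 1 / t - s := by linarith
  · exact div_nonneg (by linarith) hpos.le
  · rw [div_le_one hpos]; linarith
  · have h5 : q1 = 1 + (p1 - 1) / t := by field_simp; linarith
    have : 1 - s * t ≠ 0 := by
      have : s * t < 1 := by nlinarith
      linarith
    simp only [h5]
    field_simp
    ring
  · have h5 : q2 = p2 / t := by field_simp; linarith
    have : 1 - s * t ≠ 0 := by
      have : s * t < 1 := by nlinarith
      linarith
    simp only [h5]
    field_simp
    ring

lemma geoB {v p : ℝ × ℝ} (hv : v ∈ TO) (hp : p ∈ TO) (hf : 0 < f1 v p) (hg : 0 < g1 v p) :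
    p ∈ convexHull ℝ {pa, v, pb} := by
  obtain ⟨x, y⟩ := v
  obtain ⟨p1, p2⟩ := p
  obtain ⟨hx, hy, hxy⟩ := hv
  obtain ⟨hp1, hp2, hpp⟩ := hp
  simp only [f1, g1] at *
  have hD : 0 < 1 - x - y := by linarith
  have hc := convex_convexHull ℝ ({pa, (x, y), pb} : Set (ℝ × ℝ))
  have := hc.sum_mem (t := Finset.univ) (z := ![pa, (x, y), pb]) 
    (w := ![((1 - y) * p1 + x * p2 - x) / (1 - x - y), (1 - p1 - p2) / (1 - x - y), 
      ((1 - x) * p2 - y * (1 - p1)) / (1 - x - y)]) ?_ ?_ ?_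
  · convert this using 1
    simp [Fin.sum_univ_three, pa, pb]
    constructor <;> (field_simp; ring)
  · intro i _
    fin_cases i
    · exact div_nonneg hg.le hD.le
    · exact div_nonneg (by linarith) hD.le
    · exact div_nonneg hf.le hD.le
  · simp [Fin.sum_univ_three]; field_simp; ring
  · intro i _
    apply subset_convexHull
    fin_cases i <;> simp

lemma geoV {v : ℝ × ℝ} (hv : v ∈ TO) (S : Set (ℝ × ℝ)) (hS : ∀ p ∈ S, 0 < f1 v p) :
    v ∉ convexHull ℝ (S ∪ {pa, pb}) := by
  intro h
  have e : S ∪ {pa, pb} = insert pa (S ∪ {pb}) := by ext; simp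
  rw [e] at h
  obtain ⟨q, hq, t, h0, h1, e1, e2⟩ := (mem_hull_insert ⟨pb, by simp⟩).1 h
  obtain ⟨hx, hy, hxy⟩ := hv
  have hc : Convex ℝ {p : ℝ × ℝ | 0 < f1 v p} := by
    intro p hp r hr α β hα hβ hab
    simp only [Set.mem_ofPred_eq, f1] at *
    have : (1 - v.1) * (α • p + β • r).2 - v.2 * (1 - (α • p + β • r).1) 
      = α * ((1 - v.1) * p.2 - v.2 * (1 - p.1)) + β * ((1 - v.1) * r.2 - v.2 * (1 - r.1)) := by
      simp; linear_combination v.2 * hab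
    rw [this]
    rcases hα.lt_or_eq with h | h
    · have := mul_pos h hp
      have := mul_nonneg hβ hr.le
      linarith
    · have h2 : β = 1 := by linarith
      rw [← h, h2]; simpa using hr
  have hq' : 0 < f1 v q := by
    refine convexHull_min ?_ hc hq
    rintro p (hp | hp)
    · exact hS p hp
    · rw [Set.mem_singleton_iff] at hp; subst hp; simp [f1, pb]; linarith
  simp only [f1, pa] at *
  have : t * ((1 - v.1) * q.2 - v.2 * (1 - q.1)) = 0 := by linear_combination (-(1-v.1)) * e2 - v.2 * e1
  rcases mul_eq_zero.1 this with h | h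
  · subst h; simp at e1; linarith
  · linarith

def SA (v : ℝ × ℝ) : Set (ℝ × ℝ) := {p | p ∈ TO ∧ 0 < f1 v p ∧ g1 v p < 0}
def SB (v : ℝ × ℝ) : Set (ℝ × ℝ) := {p | p ∈ TO ∧ 0 < f1 v p ∧ 0 < g1 v p}

lemma image_ne_self {n : ℕ} (i : Fin (n+1)) (v : ℝ × ℝ) (ω : Fin n → ℝ × ℝ) :
    (i.insertNth v ω : Fin (n+1) → ℝ × ℝ) '' {j | j ≠ i} = Set.range ω := by
  ext p; constructor
  · rintro ⟨j, hj, rfl⟩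
    obtain ⟨l, rfl⟩ := Fin.exists_succAbove_eq hj
    exact ⟨l, by simp⟩
  · rintro ⟨l, rfl⟩
    exact ⟨i.succAbove l, Fin.succAbove_ne i l, by simp⟩

lemma image_ne_succAbove {n : ℕ} (i : Fin (n+1)) (v : ℝ × ℝ) (ω : Fin n → ℝ × ℝ) (j : Fin n) :
    (i.insertNth v ω : Fin (n+1) → ℝ × ℝ) '' {l | l ≠ i.succAbove j}
      = insert v (ω '' {l | l ≠ j}) := by
  ext p; constructor
  · rintro ⟨l, hl, rfl⟩
    rcases eq_or_ne l i with rfl | h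
    · left; simp
    · obtain ⟨m, rfl⟩ := Fin.exists_succAbove_eq h
      right
      refine ⟨m, ?_, by simp⟩
      rintro rfl; exact hl rfl
  · rintro (rfl | ⟨m, hm, rfl⟩)
    · exact ⟨i, (Fin.succAbove_ne i j).symm, by simp⟩
    · exact ⟨i.succAbove m, fun h => hm (Fin.succAbove_right_injective h), by simp⟩

lemma cnt_insert {n : ℕ} (i : Fin (n+1)) (v : ℝ × ℝ) (ω : Fin n → ℝ × ℝ) (I : Finset (Fin n))
    (hv : v ∈ TO) (hA : ∀ j ∈ I, ω j ∈ SA v) (hB : ∀ j ∉ I, ω j ∈ SB v) :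
    cnt pa pb (i.insertNth v ω : Fin (n+1) → ℝ × ℝ) = 1 + cnt v pb (fun j : {j // j ∈ I} => ω j) := by
  classical
  have hpos : ∀ j, 0 < f1 v (ω j) := fun j => by
    by_cases h : j ∈ I
    · exact (hA j h).2.1
    · exact (hB j h).2.1
  unfold cnt
  rw [Fin.sum_univ_succAbove _ i]
  congr 1
  · rw [image_ne_self, if_neg]
    rw [Fin.insertNth_apply_same]
    apply geoV hv
    rintro _ ⟨j, rfl⟩
    exact hpos j
  · have hI : ∀ j, j ∉ I → ω j ∈ convexHull ℝ {pa, v, pb} := fun j h =>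
      geoB hv (hB j h).1 (hB j h).2.1 (hB j h).2.2
    simp only [image_ne_succAbove, Fin.insertNth_apply_succAbove]
    rw [← Finset.sum_subset (Finset.subset_univ I), ← Finset.sum_coe_sort I]
    · refine Finset.sum_congr rfl fun j _ => ?_
      congr 1
      apply propext
      constructor
      · intro h
        apply geoA hv (hA j j.2).1 (hA j j.2).2.1 (hA j j.2).2.2
        refine convexHull_min ?_ (convex_convexHull ℝ _) h
        rintro p ((rfl | ⟨l, hl, rfl⟩) | (rfl | rfl))
        · apply subset_convexHull; simp
        · by_cases hlI : l ∈ I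
          · apply subset_convexHull
            refine Or.inr (Or.inl ⟨⟨l, hlI⟩, ?_, rfl⟩)
            rintro h; exact hl (by rw [← h])
          · refine convexHull_mono ?_ (hI l hlI)
            rintro p (rfl | rfl | rfl) <;> simp
        · apply subset_convexHull; simp
        · apply subset_convexHull; simp
      · intro h
        refine convexHull_mono ?_ h
        rintro p (⟨l, hl, rfl⟩ | (rfl | rfl))
        · refine Or.inl (Or.inr ⟨l, ?_, rfl⟩)
          intro h; exact hl (Subtype.ext h)
        · simp
        · simp
    · intro j _ hj
      rw [if_pos]
      refine convexHull_mono ?_ (hI j hj)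
      rintro p (rfl | rfl | rfl) <;> simp

lemma cnt_affine {ι : Type} [Fintype ι] (φ : (ℝ × ℝ) →ᵃ[ℝ] (ℝ × ℝ)) (hφ : Function.Injective φ)
    (a b : ℝ × ℝ) (ω : ι → ℝ × ℝ) : cnt (φ a) (φ b) (fun i => φ (ω i)) = cnt a b ω := by
  unfold cnt
  refine Finset.sum_congr rfl fun i _ => ?_
  have : (fun i => φ (ω i)) '' {j | j ≠ i} ∪ {φ a, φ b} = φ '' (ω '' {j | j ≠ i} ∪ {a, b}) := by
    rw [Set.image_union, Set.image_image, Set.image_pair]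
  rw [this, ← AffineMap.image_convexHull]
  congr 1
  exact propext hφ.mem_set_image

lemma cnt_reindex {ι κ : Type} [Fintype ι] [Fintype κ] (e : ι ≃ κ) (a b : ℝ × ℝ) (ω : κ → ℝ × ℝ) :
    cnt a b (fun i => ω (e i)) = cnt a b ω := by
  unfold cnt
  rw [← e.sum_comp]
  refine Finset.sum_congr rfl fun i _ => ?_
  have : (fun i => ω (e i)) '' {j | j ≠ i} = ω '' {j | j ≠ e i} := by
    ext p; constructor
    · rintro ⟨j, hj, rfl⟩
      exact ⟨e j, fun h => hj (e.injective h), rfl⟩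
    · rintro ⟨j, hj, rfl⟩
      exact ⟨e.symm j, fun h => hj (by simp [← h]), by simp⟩
  rw [this]

lemma isClosed_hull {κ : Type} [Fintype κ] :
    IsClosed {z : (ℝ × ℝ) × (κ → ℝ × ℝ) | z.1 ∈ convexHull ℝ (Set.range z.2)} := by
  classical
  have h1 : IsClosed {z : stdSimplex ℝ κ × ((ℝ × ℝ) × (κ → ℝ × ℝ)) | 
      ∑ i, (z.1 : κ → ℝ) i • z.2.2 i = z.2.1} := by
    apply isClosed_eq
    · refine continuous_finsetSum _ fun i _ => ?_
      have : Continuous fun z : stdSimplex ℝ κ × ((ℝ × ℝ) × (κ → ℝ × ℝ)) => (z.1 : κ → ℝ) i :=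
        (continuous_apply i).comp (continuous_subtype_val.comp continuous_fst)
      fun_prop
    · fun_prop
  have h2 := isClosedMap_snd_of_compactSpace _ h1
  convert h2 using 1
  ext ⟨p, y⟩
  constructor
  · intro h
    have h3 : convexHull ℝ (Set.range y) ⊆ 
      {q | ∃ w : κ → ℝ, (∀ i, 0 ≤ w i) ∧ ∑ i, w i = 1 ∧ ∑ i, w i • y i = q} := by
      apply convexHull_min
      · rintro _ ⟨i, rfl⟩
        refine ⟨Pi.single i 1, fun j => ?_, by simp, by simp [Pi.single_apply]⟩
        by_cases h : j = i <;> simp [h]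
      · rintro _ ⟨w, hw, hw1, rfl⟩ _ ⟨u, hu, hu1, rfl⟩ α β hα hβ hab
        refine ⟨fun i => α * w i + β * u i, fun i => ?_, ?_, ?_⟩
        · have := hw i; have := hu i; positivity
        · rw [Finset.sum_add_distrib, ← Finset.mul_sum, ← Finset.mul_sum, hw1, hu1]; simpa using hab
        · simp only [add_smul, Finset.sum_add_distrib, Finset.smul_sum, smul_smul]
    obtain ⟨w, hw, hw1, e⟩ := h3 h
    exact ⟨(⟨w, hw, hw1⟩, (p, y)), e, rfl⟩
  · rintro ⟨⟨w, p', y'⟩, e, h⟩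
    simp only [Prod.mk.injEq] at h
    obtain ⟨rfl, rfl⟩ := h
    simp only [Set.mem_ofPred_eq] at e ⊢
    rw [← e]
    exact (convex_convexHull ℝ _).sum_mem (fun i _ => w.2.1 i) w.2.2 
      fun i _ => subset_convexHull _ _ ⟨i, rfl⟩

lemma measurable_cnt {ι : Type} [Fintype ι] (a b : ℝ × ℝ) :
    Measurable (cnt a b : (ι → ℝ × ℝ) → ℕ) := by
  classical
  unfold cnt
  refine Finset.measurable_sum _ fun i _ => ?_
  refine Measurable.ite ?_ measurable_const measurable_const
  apply IsClosed.measurableSet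
  let F : (ι → ℝ × ℝ) → (ℝ × ℝ) × ({j // j ≠ i} ⊕ Bool → ℝ × ℝ) := fun ω =>
    (ω i, Sum.elim (fun j => ω j) (fun t => if t then a else b))
  have hF : Continuous F := by
    refine Continuous.prodMk (continuous_apply i) (continuous_pi ?_)
    rintro (j | t)
    · exact continuous_apply _
    · exact continuous_const
  convert isClosed_hull.preimage hF using 1
  ext ω
  simp only [Set.mem_ofPred_eq, Set.mem_preimage, F]
  rw [Set.Sum.elim_range]
  congr! 3
  · ext p; simp
  · ext p; simp [eq_comm]; tauto

def aff (m11 m12 m21 m22 d1 d2 : ℝ) : (ℝ × ℝ) →ᵃ[ℝ] (ℝ × ℝ) :=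
  (Matrix.toLin (Module.Basis.finTwoProd ℝ) (Module.Basis.finTwoProd ℝ)
    !![m11, m12; m21, m22]).toAffineMap + AffineMap.const ℝ _ (d1, d2)

lemma aff_apply (m11 m12 m21 m22 d1 d2 : ℝ) (p : ℝ × ℝ) : aff m11 m12 m21 m22 d1 d2 p =
    (m11 * p.1 + m12 * p.2 + d1, m21 * p.1 + m22 * p.2 + d2) := by
  simp [aff]

lemma measurable_aff (m11 m12 m21 m22 d1 d2 : ℝ) : Measurable (aff m11 m12 m21 m22 d1 d2) := by
  have : (aff m11 m12 m21 m22 d1 d2 : ℝ × ℝ → ℝ × ℝ) = fun p =>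
    (m11 * p.1 + m12 * p.2 + d1, m21 * p.1 + m22 * p.2 + d2) := by ext p <;> simp [aff_apply]
  rw [this]
  fun_prop

lemma vol_preimage_aff (m11 m12 m21 m22 d1 d2 : ℝ) (hD : 0 < m11 * m22 - m12 * m21)
    (S : Set (ℝ × ℝ)) :
    volume S = ENNReal.ofReal (m11 * m22 - m12 * m21) *
      volume (aff m11 m12 m21 m22 d1 d2 ⁻¹' S) := by
  set L := Matrix.toLin (Module.Basis.finTwoProd ℝ) (Module.Basis.finTwoProd ℝ)
    !![m11, m12; m21, m22] with hL
  have hdet : LinearMap.det L = m11 * m22 - m12 * m21 := by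
    rw [hL, LinearMap.det_toLin, Matrix.det_fin_two_of]
  have e : aff m11 m12 m21 m22 d1 d2 ⁻¹' S = L ⁻¹' ((fun p => p + (d1, d2)) ⁻¹' S) := by
    ext p; simp [aff, hL]
  rw [e, Measure.addHaar_preimage_linearMap _ (by rw [hdet]; exact hD.ne'),
    measure_preimage_add_right, hdet, ← mul_assoc, ← ENNReal.ofReal_mul hD.le, abs_inv,
    abs_of_pos hD, mul_inv_cancel₀ hD.ne']
  simp

lemma line_null (α β γ : ℝ) (h : α ≠ 0 ∨ β ≠ 0) :
    volume {p : ℝ × ℝ | α * p.1 + β * p.2 = γ} = 0 := by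
  let s : AffineSubspace ℝ (ℝ × ℝ) := 
    { carrier := {p : ℝ × ℝ | α * p.1 + β * p.2 = γ}
      smul_vsub_vadd_mem' := by
        intro t p q r hp hq hr
        simp only [Set.mem_ofPred_eq, vsub_eq_sub, vadd_eq_add, Prod.fst_add, Prod.snd_add, 
          Prod.smul_fst, Prod.smul_snd, Prod.fst_sub, Prod.snd_sub, smul_eq_mul] at *
        linear_combination t * hp - t * hq + hr }
  refine Measure.addHaar_affineSubspace volume s fun hs => ?_
  have h0 : ∀ p : ℝ × ℝ, α * p.1 + β * p.2 = γ := fun p => by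
    have : p ∈ s := by rw [hs]; trivial
    exact this
  have h1 := h0 (0, 0)
  have h2 := h0 (1, 0)
  have h3 := h0 (0, 1)
  simp at h1 h2 h3
  rcases h with h | h
  · exact h (by linarith)
  · exact h (by linarith)

lemma TO_subset_T : TO ⊆ T := by
  rintro ⟨x, y⟩ ⟨hx, hy, hxy⟩
  simp only at hx hy hxy
  have := (convex_convexHull ℝ ({(0,0), (1,0), (0,1)} : Set (ℝ × ℝ))).sum_mem (t := Finset.univ) 
    (z := ![(0,0), (1,0), (0,1)]) (w := ![1 - x - y, x, y]) ?_ ?_ ?_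
  · have e : ((x, y) : ℝ × ℝ) = ∑ i : Fin 3, (![1 - x - y, x, y] i) •
        (![(0,0), (1,0), (0,1)] i : ℝ × ℝ) := by simp [Fin.sum_univ_three]
    rw [e]; exact this
  · intro i _
    fin_cases i
    · exact (show 0 ≤ 1 - x - y by linarith)
    · exact hx.le
    · exact hy.le
  · simp [Fin.sum_univ_three]; ring
  · intro i _
    apply subset_convexHull
    fin_cases i <;> simp

lemma T_subset : T ⊆ {p | 0 ≤ p.1 ∧ 0 ≤ p.2 ∧ p.1 + p.2 ≤ 1} := by
  apply convexHull_min
  · rintro p (rfl | rfl | rfl) <;> norm_num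
  · rintro ⟨x, y⟩ ⟨h1, h2, h3⟩ ⟨x', y'⟩ ⟨h1', h2', h3'⟩ α β hα hβ hab
    simp only at h1 h2 h3 h1' h2' h3'
    refine ⟨?_, ?_, ?_⟩ <;> simp
    · positivity
    · positivity
    · nlinarith [mul_le_mul_of_nonneg_left h3 hα, mul_le_mul_of_nonneg_left h3' hβ]

lemma measurableSet_TO : MeasurableSet TO := by
  have h1 : MeasurableSet {p : ℝ × ℝ | 0 < p.1} := measurableSet_lt measurable_const measurable_fst
  have h2 : MeasurableSet {p : ℝ × ℝ | 0 < p.2} := measurableSet_lt measurable_const measurable_snd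
  have h3 : MeasurableSet {p : ℝ × ℝ | p.1 + p.2 < 1} := 
    measurableSet_lt (by fun_prop) measurable_const
  exact h1.inter (h2.inter h3)

lemma measurable_f1 : Measurable fun z : (ℝ × ℝ) × (ℝ × ℝ) => f1 z.1 z.2 := by
  unfold f1; fun_prop

lemma measurable_g1 : Measurable fun z : (ℝ × ℝ) × (ℝ × ℝ) => g1 z.1 z.2 := by
  unfold g1; fun_prop

lemma measurableSet_SA (v : ℝ × ℝ) : MeasurableSet (SA v) := by
  have h1 : Measurable fun p => f1 v p := measurable_f1.comp measurable_prodMk_left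
  have h2 : Measurable fun p => g1 v p := measurable_g1.comp measurable_prodMk_left
  exact measurableSet_TO.inter ((measurableSet_lt measurable_const h1).inter 
    (measurableSet_lt h2 measurable_const))

lemma measurableSet_SB (v : ℝ × ℝ) : MeasurableSet (SB v) := by
  have h1 : Measurable fun p => f1 v p := measurable_f1.comp measurable_prodMk_left
  have h2 : Measurable fun p => g1 v p := measurable_g1.comp measurable_prodMk_left
  exact measurableSet_TO.inter ((measurableSet_lt measurable_const h1).inter 
    (measurableSet_lt measurable_const h2))

lemma μT_eq : μT = (2 : ENNReal) • (volume.restrict TO) := by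
  unfold μT
  congr 1
  apply Measure.restrict_congr_set
  refine (TO_subset_T.eventuallyLE.antisymm ?_).symm
  have h0 : volume (T \ TO) = 0 := by
    refine measure_mono_null (t := {p : ℝ × ℝ | 1 * p.1 + 0 * p.2 = 0} ∪ 
      ({p : ℝ × ℝ | 0 * p.1 + 1 * p.2 = 0} ∪ {p : ℝ × ℝ | 1 * p.1 + 1 * p.2 = 1})) ?_ ?_
    · rintro p ⟨hp, hp'⟩
      obtain ⟨h1, h2, h3⟩ := T_subset hp
      by_contra hcon
      simp only [Set.mem_union, Set.mem_ofPred_eq, not_or] at hcon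
      apply hp'
      obtain ⟨c1, c2, c3⟩ := hcon
      refine ⟨lt_of_le_of_ne h1 ?_, lt_of_le_of_ne h2 ?_, lt_of_le_of_ne h3 ?_⟩
      · intro h; apply c1; rw [← h]; ring
      · intro h; apply c2; rw [← h]; ring
      · intro h; apply c3; linarith
    · rw [measure_union_null_iff, measure_union_null_iff]
      exact ⟨line_null _ _ _ (by simp), line_null _ _ _ (by simp), line_null _ _ _ (by simp)⟩
  exact ae_le_set.2 h0

lemma lintegral_TO (F : ℝ × ℝ → ENNReal) (hF : Measurable F) :
    ∫⁻ p in TO, F p = ∫⁻ x in Set.Ioo (0:ℝ) 1, ∫⁻ y in Set.Ioo (0:ℝ) (1 - x), F (x, y) := by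
  rw [← lintegral_indicator measurableSet_TO, Measure.volume_eq_prod, 
    lintegral_prod _ (hF.indicator measurableSet_TO).aemeasurable,
    ← lintegral_indicator measurableSet_Ioo]
  congr 1
  ext x
  by_cases hx : x ∈ Set.Ioo (0:ℝ) 1
  · rw [Set.indicator_of_mem hx, ← lintegral_indicator measurableSet_Ioo]
    congr 1
    ext y
    by_cases hy : y ∈ Set.Ioo (0:ℝ) (1 - x)
    · rw [Set.indicator_of_mem hy, Set.indicator_of_mem]
      exact ⟨hx.1, hy.1, by have := hy.2; simp; linarith⟩
    · rw [Set.indicator_of_notMem hy, Set.indicator_of_notMem]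
      rintro ⟨h1, h2, h3⟩
      exact hy ⟨h2, by simp at h3; linarith⟩
  · rw [Set.indicator_of_notMem hx]
    rw [lintegral_eq_zero_iff (by exact (hF.indicator measurableSet_TO).comp measurable_prodMk_left)]
    filter_upwards with y
    rw [Set.indicator_of_notMem]; rfl
    rintro ⟨h1, h2, h3⟩
    simp only at h1 h2 h3
    exact hx ⟨h1, by linarith⟩

lemma lint_Ioo (a : ℝ) (ha : 0 ≤ a) (f : ℝ → ℝ) (hf : Continuous f) 
    (h0 : ∀ x ∈ Set.Ioo 0 a, 0 ≤ f x) :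
    ∫⁻ x in Set.Ioo (0:ℝ) a, ENNReal.ofReal (f x) = ENNReal.ofReal (∫ x in (0:ℝ)..a, f x) := by
  rw [intervalIntegral.integral_of_le ha, integral_Ioc_eq_integral_Ioo, 
    ofReal_integral_eq_lintegral_ofReal]
  · exact (hf.integrableOn_Icc (a := 0) (b := a)).mono_set Set.Ioo_subset_Icc_self
  · exact (ae_restrict_iff' measurableSet_Ioo).2 (Filter.Eventually.of_forall h0)

lemma beta_nat (r : ℕ) : ∀ m : ℕ, ∫ x in (0:ℝ)..1, x ^ m * (1 - x) ^ r = 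
    (m.factorial * r.factorial : ℝ) / (m + r + 1).factorial := by
  induction r with
  | zero => 
    intro m
    simp only [pow_zero, mul_one, integral_pow, Nat.factorial_succ]
    have := Nat.factorial_ne_zero m
    push_cast
    field_simp
    simp
  | succ r ih =>
    intro m
    have h : ∫ x in (0:ℝ)..1, (((m:ℝ)+1) * (x ^ m * (1 - x) ^ (r+1)) - 
        ((r:ℝ)+1) * (x ^ (m+1) * (1 - x) ^ r)) = 0 := by
      have hd : ∀ x ∈ Set.uIcc (0:ℝ) 1, HasDerivAt (fun x : ℝ => x ^ (m+1) * (1 - x) ^ (r+1)) 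
          (((m:ℝ)+1) * (x ^ m * (1 - x) ^ (r+1)) - ((r:ℝ)+1) * (x ^ (m+1) * (1 - x) ^ r)) x := by
        intro x _
        have h1 := hasDerivAt_pow (m+1) x
        have h2 := (((hasDerivAt_id x).const_sub 1).pow (r+1))
        refine (h1.mul h2).congr_deriv ?_
        simp; ring
      rw [intervalIntegral.integral_eq_sub_of_hasDerivAt hd]
      · simp
      · apply Continuous.intervalIntegrable; fun_prop
    rw [intervalIntegral.integral_sub, intervalIntegral.integral_const_mul, 
      intervalIntegral.integral_const_mul, ih (m+1)] at h
    · have e : m + 1 + r + 1 = m + (r + 1) + 1 := by ring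
      rw [e] at h
      have h3 : ((m:ℝ)+1) ≠ 0 := by positivity
      have h4 : ((m + (r+1) + 1).factorial : ℝ) ≠ 0 := by positivity
      have h5 : ∫ x in (0:ℝ)..1, x ^ m * (1 - x) ^ (r+1) = ((r:ℝ)+1) * 
        (((m+1).factorial * r.factorial : ℝ) / (m + (r+1) + 1).factorial) / ((m:ℝ)+1) := by
        rw [eq_div_iff h3]; linarith
      rw [h5, Nat.factorial_succ m, Nat.factorial_succ r]
      push_cast
      field_simp
    · apply Continuous.intervalIntegrable; fun_prop
    · apply Continuous.intervalIntegrable; fun_prop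

lemma lintegral_main (n m : ℕ) (hm : m ≤ n) :
    ∫⁻ p, ENNReal.ofReal ((p.1 * (1 - p.1 - p.2) / (1 - p.1)) ^ m * (1 - p.1 - p.2) ^ (n - m)) ∂μT
      = ENNReal.ofReal (2 * (m.factorial * (n + 1 - m).factorial) / ((n + 1) * (n+2).factorial)) := by
  rw [μT_eq, lintegral_smul_measure, lintegral_TO _ (by fun_prop)]
  have h1 : ∀ x ∈ Set.Ioo (0:ℝ) 1, ∫⁻ y in Set.Ioo (0:ℝ) (1 - x), 
      ENNReal.ofReal ((x * (1 - x - y) / (1 - x)) ^ m * (1 - x - y) ^ (n - m)) 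
      = ENNReal.ofReal (x ^ m * (1 - x) ^ (n + 1 - m) / (n + 1)) := by
    intro x hx
    have hx1 : 0 < 1 - x := by linarith [hx.2]
    have hx0 := hx.1
    rw [lint_Ioo _ hx1.le]
    · congr 1
      have e : ∀ y, (x * (1 - x - y) / (1 - x)) ^ m * (1 - x - y) ^ (n - m) 
          = (x / (1-x)) ^ m * ((1 - x) - y) ^ n := by
        intro y
        conv_rhs => rw [← Nat.add_sub_cancel' hm, pow_add]
        rw [mul_div_right_comm, mul_pow]; ring
      simp_rw [e]
      rw [intervalIntegral.integral_const_mul, 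
        intervalIntegral.integral_comp_sub_left (fun y => y ^ n), integral_pow]
      have e2 : n + 1 = m + (n + 1 - m) := by omega
      have e3 : (1 - x)^(n+1) = (1-x)^m * (1-x)^(n+1-m) := by rw [← pow_add, ← e2]
      simp only [sub_self, sub_zero]
      rw [e3, div_pow]
      field_simp
      simp
    · fun_prop
    · intro y hy
      have : 0 < 1 - x - y := by linarith [hy.2]
      positivity
  rw [setLIntegral_congr_fun measurableSet_Ioo h1, lint_Ioo _ zero_le_one]
  · rw [intervalIntegral.integral_div, beta_nat, smul_eq_mul,
      show (2:ENNReal) = ENNReal.ofReal 2 by simp, ← ENNReal.ofReal_mul (by norm_num)]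
    have e2 : m + (n + 1 - m) + 1 = n + 2 := by omega
    rw [e2]
    congr 1
    field_simp
  · fun_prop
  · intro x hx
    have : 0 < 1 - x := by linarith [hx.2]
    have := hx.1
    positivity

instance : IsProbabilityMeasure μT := by
  constructor
  have := lintegral_main 0 0 le_rfl
  simpa using this

lemma μT_SA (v : ℝ × ℝ) (hv : v ∈ TO) : 
    μT.restrict (SA v) = ENNReal.ofReal (v.1 * (1 - v.1 - v.2) / (1 - v.1)) • 
     μT.map (aff v.1 0 (-(v.1 * (v.2 / (1 - v.1)))) (1 - v.2 / (1 - v.1)) 0 (v.2 / (1 - v.1))) := by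
  obtain ⟨x, y⟩ := v
  obtain ⟨hx, hy, hxy⟩ := id hv
  simp only at hx hy hxy ⊢
  obtain ⟨h, rfl⟩ : ∃ h, y = h * (1 - x) := ⟨y / (1-x), by field_simp [show 1 - x ≠ 0 by linarith]⟩
  have hx1 : 0 < 1 - x := by linarith
  have hh0 : 0 < h := (pos_iff_pos_of_mul_pos hy).2 hx1
  have hh : 0 < 1 - h := by
    have : 0 < (1 - x) * (1 - h) := by linarith
    exact (mul_pos_iff_of_pos_left hx1).1 this
  rw [mul_div_cancel_right₀ _ hx1.ne']
  have e0 : x * (1 - x - h * (1 - x)) / (1 - x) = x * (1 - h) - 0 * (-(x * h)) := by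
    field_simp; ring
  rw [e0]
  have hD : 0 < x * (1 - h) - 0 * (-(x * h)) := by ring_nf; nlinarith
  have hpre : aff x 0 (-(x * h)) (1 - h) 0 h ⁻¹' (SA (x, h * (1 - x))) = TO := by
    ext ⟨p1, p2⟩
    simp only [Set.mem_preimage, aff_apply, SA, f1, g1, TO, Set.mem_ofPred_eq]
    have i1 : (1 - x) * (-(x * h) * p1 + (1 - h) * p2 + h) - h * (1 - x) * (1 - (x * p1 + 0 * p2 + 0))
      = (1 - x) * (1 - h) * p2 := by ring
    have i2 : (1 - h * (1 - x)) * (x * p1 + 0 * p2 + 0) + x * (-(x * h) * p1 + (1 - h) * p2 + h) - x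
      = x * (1 - h) * (p1 + p2 - 1) := by ring
    rw [i1, i2]
    have j1 : 0 < x * (1 - h) := mul_pos hx hh
    have j2 : 0 < (1 - x) * (1 - h) := mul_pos hx1 hh
    constructor
    · rintro ⟨⟨k1, k2, k3⟩, k4, k5⟩
      refine ⟨?_, (mul_pos_iff_of_pos_left j2).1 k4, ?_⟩
      · exact (mul_pos_iff_of_pos_left hx).1 (by linarith)
      · by_contra hc; push Not at hc
        nlinarith [mul_nonneg j1.le (show 0 ≤ p1 + p2 - 1 by linarith)]
    · rintro ⟨k1, k2, k3⟩
      have l1 : 0 < x * p1 := mul_pos hx k1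
      have l2 : 0 < (1 - h) * p2 := mul_pos hh k2
      have l3 : 0 < (1 - x) * p1 := mul_pos hx1 k1
      have l4 : x * p1 < 1 := by nlinarith
      refine ⟨⟨by linarith, ?_, ?_⟩, mul_pos j2 k2, ?_⟩
      · nlinarith [mul_pos hh0 (show 0 < 1 - x * p1 by linarith)]
      · nlinarith [mul_pos hh (show 0 < 1 - p1 - p2 by linarith), mul_pos hh l3]
      · nlinarith [mul_pos j1 (show 0 < 1 - p1 - p2 by linarith)]
  rw [μT_eq]
  ext E hE
  have m1 := measurable_aff x 0 (-(x * h)) (1 - h) 0 h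
  rw [Measure.restrict_smul, Measure.map_smul, Measure.restrict_restrict (measurableSet_SA _),
    Set.inter_eq_left.2 (fun p hp => hp.1)]
  simp only [Measure.smul_apply, smul_eq_mul]
  rw [Measure.map_apply m1 hE, Measure.restrict_apply hE, Measure.restrict_apply (m1 hE),
    vol_preimage_aff _ _ _ _ 0 h hD _, Set.preimage_inter, hpre]
  ring

lemma μT_SB (v : ℝ × ℝ) (hv : v ∈ TO) : μT (SB v) = ENNReal.ofReal (1 - v.1 - v.2) := by
  obtain ⟨x, y⟩ := v
  obtain ⟨hx, hy, hxy⟩ := id hv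
  simp only at hx hy hxy ⊢
  have e0 : 1 - x - y = (1 - x) * (1 - y) - (-x) * (-y) := by ring
  have hd : 0 < 1 - x - y := by linarith
  have hpre : aff (1 - x) (-x) (-y) (1 - y) x y ⁻¹' (SB (x, y)) = TO := by
    ext ⟨p1, p2⟩
    simp only [Set.mem_preimage, aff_apply, SB, f1, g1, TO, Set.mem_ofPred_eq]
    have i1 : (1 - x) * (-y * p1 + (1 - y) * p2 + y) - y * (1 - ((1 - x) * p1 + -x * p2 + x))
      = (1 - x - y) * p2 := by ring
    have i2 : (1 - y) * ((1 - x) * p1 + -x * p2 + x) + x * (-y * p1 + (1 - y) * p2 + y) - x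
      = (1 - x - y) * p1 := by ring
    rw [i1, i2]
    constructor
    · rintro ⟨⟨k1, k2, k3⟩, k4, k5⟩
      refine ⟨(mul_pos_iff_of_pos_left hd).1 k5, (mul_pos_iff_of_pos_left hd).1 k4, ?_⟩
      by_contra hc; push Not at hc
      nlinarith [mul_nonneg hd.le (show 0 ≤ p1 + p2 - 1 by linarith)]
    · rintro ⟨k1, k2, k3⟩
      have k4 : 0 < 1 - p1 - p2 := by linarith
      refine ⟨⟨?_, ?_, ?_⟩, mul_pos hd k2, mul_pos hd k1⟩
      · nlinarith [mul_pos hx k4]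
      · nlinarith [mul_pos hy k4]
      · nlinarith [mul_pos hd k4]
  have hu : μT Set.univ = 1 := measure_univ
  rw [μT_eq] at hu ⊢
  simp only [Measure.smul_apply, smul_eq_mul] at hu ⊢
  rw [Measure.restrict_apply (measurableSet_SB _), Set.inter_eq_left.2 (fun p hp => hp.1),
    vol_preimage_aff (1 - x) (-x) (-y) (1 - y) x y (by linarith) _, hpre, ← e0]
  rw [Measure.restrict_apply_univ] at hu
  rw [mul_left_comm, hu, mul_one]

instance (n : ℕ) : IsProbabilityMeasure (P n) := by unfold P; infer_instance

def Q (n k : ℕ) : ENNReal := P n {ω | cnt pa pb ω = k}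

lemma measurableSet_cnt {ι : Type} [Fintype ι] (a b : ℝ × ℝ) (k : ℕ) :
    MeasurableSet {ω : ι → ℝ × ℝ | cnt a b ω = k} :=
  measurable_cnt a b (measurableSet_singleton k)

lemma pi_smul_const {ι : Type} [Fintype ι] (d : ENNReal) (hd : d ≠ ⊤) (ν : Measure (ℝ × ℝ))
    [IsFiniteMeasure ν] : Measure.pi (fun _ : ι => d • ν) =
      d ^ (Fintype.card ι) • Measure.pi (fun _ : ι => ν) := by
  have : IsFiniteMeasure (d • ν) := ν.smul_finite hd
  apply Measure.pi_eq
  intro s _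
  simp [Measure.pi_pi, Finset.prod_mul_distrib]

lemma pi_reindex {ι : Type} [Fintype ι] (k : ℕ) :
    Measure.pi (fun _ : ι => μT) {ω | cnt pa pb ω = k} = Q (Fintype.card ι) k := by
  let e := Fintype.equivFin ι
  have h := measurePreserving_piCongrLeft (α := fun _ : Fin (Fintype.card ι) => ℝ × ℝ)
    (fun _ => μT) e
  unfold Q P
  rw [← h.measure_preimage_equiv]
  congr 1
  ext ω
  simp only [Set.mem_ofPred_eq, Set.mem_preimage]
  rw [← cnt_reindex e]
  have : (fun i => (MeasurableEquiv.piCongrLeft 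
      (fun _ : Fin (Fintype.card ι) => ℝ × ℝ) e) ω (e i)) = ω := by
    funext i
    exact Equiv.piCongrLeft_apply_apply (fun _ : Fin (Fintype.card ι) => ℝ × ℝ) e ω i
  rw [this]

lemma QI {ι : Type} [Fintype ι] (v : ℝ × ℝ) (hv : v ∈ TO) (k : ℕ) :
    Measure.pi (fun _ : ι => μT) {η | (∀ j, η j ∈ SA v) ∧ cnt v pb η = k} =
      ENNReal.ofReal (v.1 * (1 - v.1 - v.2) / (1 - v.1)) ^ (Fintype.card ι) *
       Q (Fintype.card ι) k := by
  have e : {η : ι → ℝ × ℝ | (∀ j, η j ∈ SA v) ∧ cnt v pb η = k} = 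
      {η | cnt v pb η = k} ∩ Set.univ.pi (fun _ => SA v) := by
    ext η; simp; tauto
  have hm := measurable_aff v.1 0 (-(v.1 * (v.2 / (1 - v.1)))) (1 - v.2 / (1 - v.1)) 0 
    (v.2 / (1 - v.1))
  have hp : IsProbabilityMeasure (μT.map (aff v.1 0 (-(v.1 * (v.2 / (1 - v.1)))) 
    (1 - v.2 / (1 - v.1)) 0 (v.2 / (1 - v.1)))) := 
      Measure.isProbabilityMeasure_map hm.aemeasurable
  rw [e, ← Measure.restrict_apply (measurableSet_cnt _ _ _), Measure.restrict_pi_pi, μT_SA v hv,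
    pi_smul_const _ ENNReal.ofReal_ne_top, ← Measure.pi_map_pi (fun _ => hm.aemeasurable)]
  rw [Measure.smul_apply, smul_eq_mul, Measure.map_apply (by fun_prop) (measurableSet_cnt _ _ _),
    ← pi_reindex]
  congr 2
  obtain ⟨hx, hy, hxy⟩ := hv
  have hx1 : 0 < 1 - v.1 := by linarith
  set h := v.2 / (1 - v.1) with hh
  have hvy : v.2 = h * (1 - v.1) := by rw [hh]; field_simp
  have hh1 : h < 1 := by rw [hh, div_lt_one hx1]; linarith
  set φ := aff v.1 0 (-(v.1 * h)) (1 - h) 0 h with hφ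
  have ha : φ pa = v := by
    rw [hφ, aff_apply]; ext
    · simp [pa]
    · simp [pa]; linarith
  have hb : φ pb = pb := by
    rw [hφ, aff_apply]; ext <;> simp [pb]
  have hinj : Function.Injective φ := by
    rintro ⟨p1, p2⟩ ⟨q1, q2⟩ hpq
    rw [hφ, aff_apply, aff_apply] at hpq
    simp only [Prod.mk.injEq] at hpq ⊢
    have e1 : p1 = q1 := by
      apply mul_left_cancel₀ hx.ne'; linarith [hpq.1]
    subst e1
    refine ⟨rfl, ?_⟩
    apply mul_left_cancel₀ (show 1 - h ≠ 0 by linarith)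
    linarith [hpq.2]
  ext ω
  simp only [Set.mem_preimage, Set.mem_ofPred_eq]
  rw [← cnt_affine φ hinj pa pb ω, ha, hb]

lemma μT_null {S : Set (ℝ × ℝ)} (h : volume S = 0) : μT S = 0 := by
  have h2 : volume.restrict T S = 0 :=
    nonpos_iff_eq_zero.1 ((Measure.restrict_le_self S).trans h.le)
  unfold μT
  rw [Measure.smul_apply, h2, smul_zero]

lemma ae_TO : ∀ᵐ p ∂μT, p ∈ TO := by
  rw [μT_eq]
  apply Measure.ae_smul_measure
  exact ae_restrict_mem measurableSet_TO

lemma ae_pi_of {ι : Type} [Fintype ι] {p : ℝ × ℝ → Prop} (h : ∀ᵐ x ∂μT, p x) :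
    ∀ᵐ ω ∂(Measure.pi (fun _ : ι => μT)), ∀ j, p (ω j) := by
  rw [ae_all_iff]
  intro j
  exact (Measure.tendsto_eval_ae_ae (μ := fun _ : ι => μT) (i := j)).eventually h

lemma ae_f1 (v : ℝ × ℝ) (hv : v ∈ TO) : ∀ᵐ p ∂μT, f1 v p ≠ 0 := by
  rw [ae_iff]
  apply μT_null
  refine measure_mono_null ?_ (line_null v.2 (1 - v.1) v.2 (Or.inl hv.2.1.ne'))
  intro p hp
  simp only [f1, not_not, Set.mem_ofPred_eq] at hp ⊢
  linarith

lemma ae_g1 (v : ℝ × ℝ) (hv : v ∈ TO) : ∀ᵐ p ∂μT, g1 v p ≠ 0 := by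
  rw [ae_iff]
  apply μT_null
  refine measure_mono_null ?_ (line_null (1 - v.2) v.1 v.1 (Or.inr hv.1.ne'))
  intro p hp
  simp only [g1, not_not, Set.mem_ofPred_eq] at hp ⊢
  linarith

def DI {n : ℕ} (v : ℝ × ℝ) (k : ℕ) (I : Finset (Fin n)) : Set (Fin n → ℝ × ℝ) :=
  {ω | (∀ j ∈ I, ω j ∈ SA v) ∧ (∀ j ∉ I, ω j ∈ SB v) ∧ cnt v pb (fun j : {j // j ∈ I} => ω j) = k}

lemma measurableSet_DI {n : ℕ} (v : ℝ × ℝ) (k : ℕ) (I : Finset (Fin n)) : 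
    MeasurableSet (DI v k I) := by
  have h1 : MeasurableSet {ω : Fin n → ℝ × ℝ | ∀ j ∈ I, ω j ∈ SA v} := by
    have : {ω : Fin n → ℝ × ℝ | ∀ j ∈ I, ω j ∈ SA v} = 
      ⋂ j ∈ I, (fun ω : Fin n → ℝ × ℝ => ω j) ⁻¹' SA v := by ext; simp
    rw [this]
    exact Finset.measurableSet_biInter _ fun j _ => measurable_pi_apply j (measurableSet_SA v)
  have h2 : MeasurableSet {ω : Fin n → ℝ × ℝ | ∀ j ∉ I, ω j ∈ SB v} := by
    have : {ω : Fin n → ℝ × ℝ | ∀ j ∉ I, ω j ∈ SB v} = 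
      ⋂ j ∈ Iᶜ, (fun ω : Fin n → ℝ × ℝ => ω j) ⁻¹' SB v := by ext; simp
    rw [this]
    exact Finset.measurableSet_biInter _ fun j _ => measurable_pi_apply j (measurableSet_SB v)
  have hr : Measurable fun (ω : Fin n → ℝ × ℝ) (j : {j // j ∈ I}) => ω j := by fun_prop
  exact h1.inter (h2.inter (hr (measurableSet_cnt v pb k)))

lemma P_DI {n : ℕ} (v : ℝ × ℝ) (hv : v ∈ TO) (k : ℕ) (I : Finset (Fin n)) :
    P n (DI v k I) = ENNReal.ofReal (v.1 * (1 - v.1 - v.2) / (1 - v.1)) ^ I.card *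
      ENNReal.ofReal (1 - v.1 - v.2) ^ (n - I.card) * Q I.card k := by
  have h := measurePreserving_piEquivPiSubtypeProd (α := fun _ : Fin n => ℝ × ℝ) 
    (fun _ => μT) (fun j => j ∈ I)
  have e : DI v k I = (MeasurableEquiv.piEquivPiSubtypeProd (fun _ : Fin n => ℝ × ℝ) 
      (fun j => j ∈ I)) ⁻¹' ({η | (∀ j, η j ∈ SA v) ∧ cnt v pb η = k} ×ˢ
        Set.univ.pi (fun _ => SB v)) := by
    ext ω
    simp only [DI, Set.mem_ofPred_eq, Set.mem_preimage, Set.mem_prod, Set.mem_univ_pi,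
      Subtype.forall]
    constructor
    · rintro ⟨h1, h2, h3⟩
      exact ⟨⟨h1, h3⟩, h2⟩
    · rintro ⟨⟨h1, h3⟩, h2⟩
      exact ⟨h1, h2, h3⟩
  unfold P
  rw [e, h.measure_preimage_equiv, Measure.prod_prod, Measure.pi_pi]
  have hQ := QI (ι := {j // j ∈ I}) v hv k
  rw [Fintype.card_coe] at hQ
  refine (congrArg₂ (y' := ∏ i : {j // j ∉ I}, μT (SB v))
    (x' := ENNReal.ofReal (v.1 * (1 - v.1 - v.2) / (1 - v.1)) ^ I.card * Q I.card k)
    (· * ·) (by convert hQ) (by congr)).trans ?_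
  simp only [μT_SB v hv, Finset.prod_const, Finset.card_univ]
  rw [Fintype.card_subtype_compl, Fintype.card_coe, Fintype.card_fin]
  ring

lemma section_measure {n : ℕ} (i : Fin (n+1)) (v : ℝ × ℝ) (hv : v ∈ TO) (k : ℕ) :
    P n {ω | (∀ j, 0 < f1 v (ω j)) ∧ 
      cnt pa pb (i.insertNth v ω : Fin (n+1) → ℝ × ℝ) = k + 1} =
    ∑ I : Finset (Fin n), ENNReal.ofReal (v.1 * (1 - v.1 - v.2) / (1 - v.1)) ^ I.card *
      ENNReal.ofReal (1 - v.1 - v.2) ^ (n - I.card) * Q I.card k := by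
  classical
  have h1 : {ω | (∀ j, 0 < f1 v (ω j)) ∧ 
      cnt pa pb (i.insertNth v ω : Fin (n+1) → ℝ × ℝ) = k + 1} =ᵐ[P n]
      ⋃ I : Finset (Fin n), DI v k I := by
    filter_upwards [ae_pi_of (ι := Fin n) ae_TO, ae_pi_of (ι := Fin n) (ae_g1 v hv)] with ω hω hg
    apply propext
    change ((∀ j, 0 < f1 v (ω j)) ∧ 
      cnt pa pb (i.insertNth v ω : Fin (n+1) → ℝ × ℝ) = k + 1) ↔ ω ∈ ⋃ I, DI v k I
    rw [Set.mem_iUnion]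
    constructor
    · rintro ⟨hf, hc⟩
      let I : Finset (Fin n) := Finset.univ.filter fun j => g1 v (ω j) < 0
      have hA : ∀ j ∈ I, ω j ∈ SA v := fun j hj => 
        ⟨hω j, hf j, (Finset.mem_filter.1 hj).2⟩
      have hB : ∀ j ∉ I, ω j ∈ SB v := fun j hj => by
        refine ⟨hω j, hf j, lt_of_le_of_ne ?_ (hg j).symm⟩
        simpa [I] using hj
      refine ⟨I, hA, hB, ?_⟩
      rw [cnt_insert i v ω I hv hA hB] at hc
      omega
    · rintro ⟨I, hA, hB, hc⟩
      refine ⟨fun j => ?_, ?_⟩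
      · by_cases h : j ∈ I
        · exact (hA j h).2.1
        · exact (hB j h).2.1
      · rw [cnt_insert i v ω I hv hA hB, hc]; omega
  rw [measure_congr h1, measure_iUnion _ (fun I => measurableSet_DI v k I), tsum_fintype]
  · exact Finset.sum_congr rfl fun I _ => P_DI v hv k I
  · intro I J hIJ
    rw [Function.onFun, Set.disjoint_left]
    rintro ω ⟨hA, hB, _⟩ ⟨hA', hB', _⟩
    apply hIJ
    ext j
    constructor
    · intro h; by_contra h'
      exact lt_asymm (hA j h).2.2 (hB' j h').2.2
    · intro h; by_contra h'
      exact lt_asymm (hA' j h).2.2 (hB j h').2.2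

lemma cnt_insert_ne_zero {n : ℕ} (i : Fin (n+1)) (v : ℝ × ℝ) (ω : Fin n → ℝ × ℝ) (hv : v ∈ TO) 
    (h : ∀ j, 0 < f1 v (ω j)) : cnt pa pb (i.insertNth v ω : Fin (n+1) → ℝ × ℝ) ≠ 0 := by
  classical
  unfold cnt
  rw [Fin.sum_univ_succAbove _ i, image_ne_self, if_neg]
  · omega
  · rw [Fin.insertNth_apply_same]
    apply geoV hv
    rintro _ ⟨j, rfl⟩
    exact h j

def Good {n : ℕ} (ω : Fin n → ℝ × ℝ) : Prop := 
  (∀ i, ω i ∈ TO) ∧ ∀ i j, i ≠ j → f1 (ω i) (ω j) ≠ 0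

lemma ae_good (n : ℕ) : ∀ᵐ ω ∂(P (n+1)), Good ω := by
  unfold Good
  refine (ae_pi_of ae_TO).and ?_
  rw [ae_all_iff]; intro i
  rw [ae_all_iff]; intro j
  by_cases hij : i = j
  · simp [hij]
  obtain ⟨l, rfl⟩ := Fin.exists_succAbove_eq (Ne.symm hij)
  have h := measurePreserving_piFinSuccAbove (α := fun _ : Fin (n+1) => ℝ × ℝ) (fun _ => μT) i
  have hS : MeasurableSet {z : (ℝ × ℝ) × (Fin n → ℝ × ℝ) | f1 z.1 (z.2 l) = 0} := by
    have : Measurable fun z : (ℝ × ℝ) × (Fin n → ℝ × ℝ) => f1 z.1 (z.2 l) := by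
      unfold f1; fun_prop
    exact this (measurableSet_singleton 0)
  have h2 : (μT.prod (P n)) {z : (ℝ × ℝ) × (Fin n → ℝ × ℝ) | f1 z.1 (z.2 l) = 0} = 0 := by
    rw [Measure.measure_prod_null hS]
    filter_upwards [ae_TO] with v hv
    have := ae_pi_of (ι := Fin n) (ae_f1 v hv)
    refine measure_mono_null ?_ (ae_iff.1 this)
    intro ω hω hcon
    exact hcon l hω
  have h3 : P (n+1) {ω | f1 (ω i) (ω (i.succAbove l)) = 0} = 0 := by
    unfold P at h2 ⊢
    rw [← h.measure_preimage_equiv] at h2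
    exact h2
  rw [ae_iff]
  refine measure_mono_null ?_ h3
  intro ω hω
  simpa [hij] using hω

lemma Q_succ (n k : ℕ) : Q (n+1) k = ∑ i : Fin (n+1), ∫⁻ v, P n {ω | (∀ j, 0 < f1 v (ω j)) ∧ 
      cnt pa pb (i.insertNth v ω : Fin (n+1) → ℝ × ℝ) = k} ∂μT := by
  classical
  let M : Fin (n+1) → Set (Fin (n+1) → ℝ × ℝ) := fun i => 
    {ω | (∀ j, 0 < f1 (ω i) (ω (i.succAbove j))) ∧ cnt pa pb ω = k}
  have hM : ∀ i, MeasurableSet (M i) := by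
    intro i
    have : {ω : Fin (n+1) → ℝ × ℝ | (∀ j, 0 < f1 (ω i) (ω (i.succAbove j)))} = 
      ⋂ j, {ω | 0 < f1 (ω i) (ω (i.succAbove j))} := by ext; simp
    refine MeasurableSet.inter ?_ (measurableSet_cnt pa pb k)
    change MeasurableSet {ω : Fin (n+1) → ℝ × ℝ | (∀ j, 0 < f1 (ω i) (ω (i.succAbove j)))}
    rw [this]
    refine MeasurableSet.iInter fun j => measurableSet_lt measurable_const ?_
    unfold f1; fun_prop
  have h1 : {ω : Fin (n+1) → ℝ × ℝ | cnt pa pb ω = k} =ᵐ[P (n+1)] ⋃ i, M i := by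
    filter_upwards [ae_good n] with ω hω
    apply propext
    change (cnt pa pb ω = k) ↔ ω ∈ ⋃ i, M i
    rw [Set.mem_iUnion]
    constructor
    · intro hc
      obtain ⟨i, hi⟩ := Finite.exists_min (fun i => (ω i).2 / (1 - (ω i).1))
      refine ⟨i, fun j => ?_, hc⟩
      refine lt_of_le_of_ne ?_ (hω.2 i (i.succAbove j) (Fin.succAbove_ne i j).symm).symm
      have := hi (i.succAbove j)
      obtain ⟨a1, a2, a3⟩ := hω.1 i
      obtain ⟨b1, b2, b3⟩ := hω.1 (i.succAbove j)
      rw [div_le_div_iff₀ (by linarith) (by linarith)] at this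
      unfold f1
      linarith
    · rintro ⟨i, hi⟩
      exact hi.2
  unfold Q
  rw [measure_congr h1, measure_iUnion _ hM, tsum_fintype]
  · refine Finset.sum_congr rfl fun i _ => ?_
    have h := measurePreserving_piFinSuccAbove (α := fun _ : Fin (n+1) => ℝ × ℝ) (fun _ => μT) i
    have h2 := h.symm.measure_preimage_equiv (M i)
    have hm := (MeasurableEquiv.piFinSuccAbove (fun _ : Fin (n+1) => ℝ × ℝ) i).symm.measurable (hM i)
    unfold P
    rw [← h2, Measure.prod_apply hm]
    refine lintegral_congr fun v => ?_
    congr 1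
    ext ω
    simp only [M, Set.mem_preimage, Set.mem_ofPred_eq]
    have e : (MeasurableEquiv.piFinSuccAbove (fun _ : Fin (n+1) => ℝ × ℝ) i).symm (v, ω) = 
      (i.insertNth v ω : Fin (n+1) → ℝ × ℝ) := rfl
    rw [e]
    simp
  · intro i j hij
    rw [Function.onFun, Set.disjoint_left]
    rintro ω ⟨hi, _⟩ ⟨hj, _⟩
    obtain ⟨l, rfl⟩ := Fin.exists_succAbove_eq (Ne.symm hij)
    obtain ⟨m, hm⟩ := Fin.exists_succAbove_eq hij
    have h1 := hi l
    have h2 := hj m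
    rw [hm] at h2
    unfold f1 at h1 h2
    linarith

lemma Q_succ_zero (n : ℕ) : Q (n+1) 0 = 0 := by
  rw [Q_succ]
  refine Finset.sum_eq_zero fun i _ => ?_
  rw [lintegral_eq_zero_iff']
  · filter_upwards [ae_TO] with v hv
    refine measure_mono_null ?_ (measure_empty (μ := P n))
    rintro ω ⟨h1, h2⟩
    exact cnt_insert_ne_zero i v ω hv h1 h2
  · refine AEMeasurable.congr (f := fun _ => 0) aemeasurable_const ?_
    filter_upwards [ae_TO] with v hv
    symm
    refine measure_mono_null ?_ (measure_empty (μ := P n))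
    rintro ω ⟨h1, h2⟩
    exact cnt_insert_ne_zero i v ω hv h1 h2

lemma Q_rec (n k : ℕ) : Q (n+1) (k+1) = (n + 1 : ENNReal) * ∑ m ∈ Finset.range (n+1), 
    (n.choose m : ENNReal) * (ENNReal.ofReal (2 * (m.factorial * (n + 1 - m).factorial) / 
      ((n + 1) * (n+2).factorial)) * Q m k) := by
  rw [Q_succ]
  have h1 : ∀ i : Fin (n+1), ∫⁻ v, P n {ω | (∀ j, 0 < f1 v (ω j)) ∧ 
      cnt pa pb (i.insertNth v ω : Fin (n+1) → ℝ × ℝ) = k + 1} ∂μT = 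
      ∑ m ∈ Finset.range (n+1), 
    (n.choose m : ENNReal) * (ENNReal.ofReal (2 * (m.factorial * (n + 1 - m).factorial) / 
      ((n + 1) * (n+2).factorial)) * Q m k) := by
    intro i
    have h2 : ∀ᵐ v ∂μT, P n {ω | (∀ j, 0 < f1 v (ω j)) ∧ 
      cnt pa pb (i.insertNth v ω : Fin (n+1) → ℝ × ℝ) = k + 1} =
       ∑ I : Finset (Fin n), ENNReal.ofReal ((v.1 * (1 - v.1 - v.2) / (1 - v.1)) ^ I.card *
        (1 - v.1 - v.2) ^ (n - I.card)) * Q I.card k := by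
      filter_upwards [ae_TO] with v hv
      rw [section_measure i v hv k]
      obtain ⟨a1, a2, a3⟩ := hv
      have b1 : 0 < 1 - v.1 - v.2 := by linarith
      have b2 : 0 < 1 - v.1 := by linarith
      refine Finset.sum_congr rfl fun I _ => ?_
      rw [ENNReal.ofReal_mul (by positivity), ENNReal.ofReal_pow (by positivity), 
        ENNReal.ofReal_pow b1.le]
    rw [lintegral_congr_ae h2, lintegral_finsetSum _ (fun I _ => by fun_prop)]
    have h3 : ∀ I : Finset (Fin n), ∫⁻ v, ENNReal.ofReal ((v.1 * (1 - v.1 - v.2) / (1 - v.1)) ^ I.card *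
        (1 - v.1 - v.2) ^ (n - I.card)) * Q I.card k ∂μT = 
        ENNReal.ofReal (2 * (I.card.factorial * (n + 1 - I.card).factorial) / 
      ((n + 1) * (n+2).factorial)) * Q I.card k := by
      intro I
      rw [lintegral_mul_const _ (by fun_prop), lintegral_main n I.card (by simpa using I.card_le_univ)]
    simp_rw [h3]
    have h4 := Finset.sum_powerset_apply_card (fun m => ENNReal.ofReal (2 * (m.factorial * (n + 1 - m).factorial) / 
      ((n + 1) * (n+2).factorial)) * Q m k) (x := (Finset.univ : Finset (Fin n)))
    simpa using h4
  simp_rw [h1]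
  simp

lemma Q_ne_top (n k : ℕ) : Q n k ≠ ⊤ := measure_ne_top _ _

lemma Q_eq_pf (k : ℕ) : ∀ n, (Q n k).toReal = pf n k := by
  have h0 : ∀ ω : Fin 0 → ℝ × ℝ, cnt pa pb ω = 0 := fun ω => by simp [cnt]
  induction k with
  | zero =>
    intro n
    cases n with
    | zero => simp [Q, h0, pf_zero_zero]
    | succ n => simp [Q_succ_zero, pf_succ_zero]
  | succ k ih =>
    intro n
    cases n with
    | zero => simp [Q, h0, pf_zero_succ]
    | succ n =>
      have hr := pf_rec n k
      rw [Q_rec, ENNReal.toReal_mul, ENNReal.toReal_sum]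
      · have e : ∀ m ∈ Finset.range (n+1), ((n.choose m : ENNReal) * 
          (ENNReal.ofReal (2 * (m.factorial * (n + 1 - m).factorial) / 
            ((n + 1) * (n+2).factorial)) * Q m k)).toReal = 
            2 / (((n:ℝ)+1)^2*(n+2)) * (((n:ℝ)+1-m) * pf m k) := by
          intro m hm
          have hm' : m ≤ n := by simp at hm; omega
          rw [ENNReal.toReal_mul, ENNReal.toReal_mul, ih, ENNReal.toReal_ofReal (by positivity)]
          obtain ⟨r, rfl⟩ := Nat.exists_eq_add_of_le hm'
          have e1 : m + r + 1 - m = r + 1 := by omega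
          have e2 := Nat.add_choose_mul_factorial_mul_factorial m r
          have e3 : ((m+r).choose m : ℝ) * m.factorial * r.factorial = (m+r).factorial := by
            rw [Nat.choose_symm_add]; exact_mod_cast e2
          have e4 : (m + r + 2).factorial = (m+r+2) * ((m+r+1) * (m+r).factorial) := by
            rw [Nat.factorial_succ, Nat.factorial_succ]
          rw [e1, e4, Nat.factorial_succ r]
          push_cast
          rw [← e3]
          have : (m.factorial : ℝ) ≠ 0 := by positivity
          have : (r.factorial : ℝ) ≠ 0 := by positivity
          have : ((m+r).choose m : ℝ) ≠ 0 := by 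
            have := Nat.choose_pos (show m ≤ m + r by omega)
            positivity
          simp
          field_simp
          ring
        rw [Finset.sum_congr rfl e, ← Finset.mul_sum]
        have h5 : ((n:ℝ)+1) ≠ 0 := by positivity
        have h6 : ((n:ℝ)+2) ≠ 0 := by positivity
        have e5 : ((n:ENNReal) + 1).toReal = (n:ℝ) + 1 := by
          have : ((n:ENNReal) + 1) = ((n+1 : ℕ) : ENNReal) := by push_cast; rfl
          rw [this, ENNReal.toReal_natCast]; push_cast; rfl
        rw [e5]
        have h7 : pf (n+1) (k+1) = (2 * ∑ m ∈ Finset.range (n+1), ((n:ℝ)+1-m) * pf m k) / 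
          (((n:ℝ)+1)*(n+2)) := by
          rw [eq_div_iff (by positivity), ← hr]; ring
        rw [h7]
        field_simp
      · intro m _
        exact ENNReal.mul_ne_top (by simp) (ENNReal.mul_ne_top ENNReal.ofReal_ne_top (Q_ne_top m k))

lemma ext_of {s : Set (ℝ × ℝ)} (hs : s.Nonempty) {p : ℝ × ℝ} (hp : p ∉ convexHull ℝ s) :
    p ∈ Set.extremePoints ℝ (convexHull ℝ (insert p s)) := by
  rw [mem_extremePoints_iff_left]
  refine ⟨subset_convexHull ℝ _ (Set.mem_insert _ _), ?_⟩
  intro x1 h1 x2 h2 h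
  obtain ⟨q1, hq1, t1, ht1, _, e1, e1'⟩ := (mem_hull_insert hs).1 h1
  obtain ⟨q2, hq2, t2, ht2, _, e2, e2'⟩ := (mem_hull_insert hs).1 h2
  obtain ⟨a, b, ha, hb, hab, hx⟩ := h
  have f1 := congrArg Prod.fst hx
  have f2 := congrArg Prod.snd hx
  simp only [Prod.fst_add, Prod.snd_add, Prod.smul_fst, Prod.smul_snd, smul_eq_mul] at f1 f2
  have hb' : b = 1 - a := by linarith
  by_cases h0 : t1 = 0
  · subst h0
    ext
    · rw [e1]; ring
    · rw [e1']; ring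
  · exfalso
    have ht : 0 < t1 := lt_of_le_of_ne ht1 (Ne.symm h0)
    have hat : 0 < a * t1 := by positivity
    have hbt : 0 ≤ b * t2 := by positivity
    have hsum : 0 < a * t1 + b * t2 := by linarith
    apply hp
    refine mem_hull_of_comb hq1 hq2 (b * t2 / (a * t1 + b * t2)) (by positivity)
      (by rw [div_le_one hsum]; linarith) ?_ ?_
    · rw [e1, e2] at f1
      field_simp
      subst hb'
      linear_combination -f1
    · rw [e1', e2'] at f2
      field_simp
      subst hb'
      linear_combination -f2

lemma ext_iff' {S : Set (ℝ × ℝ)} {p : ℝ × ℝ} (hp : p ∈ S) (hs : (S \ {p}).Nonempty) :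
    p ∈ Set.extremePoints ℝ (convexHull ℝ S) ↔ p ∉ convexHull ℝ (S \ {p}) := by
  constructor
  · intro h hc
    have h2 := ((convex_convexHull ℝ S).mem_extremePoints_iff_mem_sdiff_convexHull_sdiff).1 h
    exact h2.2 (convexHull_mono (Set.sdiff_subset_sdiff_left (subset_convexHull ℝ S)) hc)
  · intro h
    have h2 := ext_of hs h
    rwa [Set.insert_sdiff_singleton, Set.insert_eq_of_mem hp] at h2

lemma N_eq_cnt {n : ℕ} (ω : Fin n → ℝ × ℝ) (h : Good ω) : N n ω = cnt pa pb ω := by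
  classical
  obtain ⟨hT, hf⟩ := h
  have hinj : Function.Injective ω := by
    intro i j hij
    by_contra hne
    apply hf i j hne
    rw [hij]; simp only [f1]; ring
  have hna : ∀ i, ω i ≠ pa := by
    intro i hi
    have := (hT i).2.1
    rw [hi] at this; simp [pa] at this
  have hnb : ∀ i, ω i ≠ pb := by
    intro i hi
    have := (hT i).1
    rw [hi] at this; simp [pb] at this
  have hab : pa ≠ pb := by simp [pa, pb]
  set S : Set (ℝ × ℝ) := Set.range ω ∪ {pa, pb} with hS
  have hc : Tchain n ω = convexHull ℝ S := rfl
  have hea : pa ∈ Set.extremePoints ℝ (convexHull ℝ S) := by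
    rw [ext_iff' (by simp [hS]) ⟨pb, by simp [hS, hab.symm]⟩]
    intro hm
    have hsub : S \ {pa} ⊆ {p | p.1 < 1} := by
      rintro p ⟨hp, hpa⟩
      rcases hp with ⟨i, rfl⟩ | rfl | rfl
      · have := hT i
        simp only [TO, Set.mem_ofPred_eq] at this ⊢
        linarith [this.2.1, this.2.2]
      · exact absurd rfl hpa
      · simp [pb]
    have hcv : Convex ℝ {p : ℝ × ℝ | p.1 < 1} :=
      convex_halfSpace_lt (LinearMap.fst ℝ ℝ ℝ).isLinear 1
    have := convexHull_min hsub hcv hm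
    simp [pa] at this
  have heb : pb ∈ Set.extremePoints ℝ (convexHull ℝ S) := by
    rw [ext_iff' (by simp [hS]) ⟨pa, by simp [hS, hab]⟩]
    intro hm
    have hsub : S \ {pb} ⊆ {p | p.2 < 1} := by
      rintro p ⟨hp, hpa⟩
      rcases hp with ⟨i, rfl⟩ | rfl | rfl
      · have := hT i
        simp only [TO, Set.mem_ofPred_eq] at this ⊢
        linarith [this.1, this.2.2]
      · simp [pa]
      · exact absurd rfl hpa
    have hcv : Convex ℝ {p : ℝ × ℝ | p.2 < 1} :=
      convex_halfSpace_lt (LinearMap.snd ℝ ℝ ℝ).isLinear 1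
    have := convexHull_min hsub hcv hm
    simp [pb] at this
  have hei : ∀ i, ω i ∈ Set.extremePoints ℝ (convexHull ℝ S) ↔
      ω i ∉ convexHull ℝ (ω '' {j | j ≠ i} ∪ {pa, pb}) := by
    intro i
    rw [ext_iff' (by simp [hS]) ⟨pa, by simp [hS, (hna i).symm]⟩]
    have : S \ {ω i} = ω '' {j | j ≠ i} ∪ {pa, pb} := by
      ext p
      constructor
      · rintro ⟨⟨j, rfl⟩ | hp, hne⟩
        · exact Or.inl ⟨j, fun e => hne (by rw [e]; rfl), rfl⟩
        · exact Or.inr hp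
      · rintro (⟨j, hj, rfl⟩ | hp)
        · exact ⟨Or.inl ⟨j, rfl⟩, fun e => hj (hinj e)⟩
        · refine ⟨Or.inr hp, ?_⟩
          rintro rfl
          rcases hp with e | e
          · exact hna i e
          · exact hnb i e
    rw [this]
  let F : Finset (Fin n) := Finset.univ.filter
    (fun i => ω i ∉ convexHull ℝ (ω '' {j | j ≠ i} ∪ {pa, pb}))
  have hE : Set.extremePoints ℝ (convexHull ℝ S) =
      ((insert pa (insert pb (F.image ω)) : Finset (ℝ × ℝ)) : Set (ℝ × ℝ)) := by
    ext p
    simp only [Finset.coe_insert, Finset.coe_image, Set.mem_insert_iff, Set.mem_image]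
    constructor
    · intro hp
      rcases extremePoints_convexHull_subset hp with ⟨i, rfl⟩ | rfl | rfl
      · exact Or.inr (Or.inr ⟨i, by simpa [F] using (hei i).1 hp, rfl⟩)
      · exact Or.inl rfl
      · exact Or.inr (Or.inl rfl)
    · rintro (rfl | rfl | ⟨i, hi, rfl⟩)
      · exact hea
      · exact heb
      · exact (hei i).2 (by simpa [F] using hi)
  unfold N
  rw [hc, hE, Set.ncard_coe_finset, Finset.card_insert_of_notMem, Finset.card_insert_of_notMem,
    Finset.card_image_of_injective _ hinj]
  · simp only [F, Finset.card_filter, cnt]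
    rw [Nat.add_assoc, Nat.add_sub_cancel]
    refine Finset.sum_congr rfl fun i _ => ?_
    by_cases hi : ω i ∈ convexHull ℝ (ω '' {j | j ≠ i} ∪ {pa, pb})
    · rw [if_pos hi, if_neg (not_not.2 hi)]
    · rw [if_neg hi, if_pos hi]
  · simp only [Finset.mem_image, not_exists, not_and]
    exact fun i _ => hnb i
  · simp only [Finset.mem_insert, Finset.mem_image, not_or, not_exists, not_and]
    exact ⟨hab, fun i _ => hna i⟩


/-- `P(N_n = k) = Σ_{ℓ=k}^n (-1)^{ℓ+k} C(n,ℓ) c(k,ℓ)` for `1 ≤ n`, `k ≤ n`. -/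
theorem stmt11 (n k : ℕ) (hn : 1 ≤ n) (hk : k ≤ n) :
    (P n {ω | N n ω = k}).toReal
      = ∑ l ∈ Finset.Icc k n, (-1 : ℝ) ^ (l + k) * (n.choose l : ℝ) * c k l := by
  obtain ⟨m, rfl⟩ : ∃ m, n = m + 1 := ⟨n - 1, by omega⟩
  rw [pf_eq, ← Q_eq_pf, Q]
  congr 1
  apply measure_congr
  filter_upwards [ae_good m] with ω hω
  change (N (m + 1) ω = k) = (cnt pa pb ω = k)
  rw [N_eq_cnt ω hω]

end
end
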